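/- arXiv:1708.00832 — 2 statements merged into one kernel-verified Lean document; each statement's English description precedes it below -/
import Mathlib

section
/- Let T = {1243, 2314, 3412} (patterns of length 4). Then the generating function for T-avoiders satisfies, as formal power series over ℚ, (1-x)^6·(1-2x)^3·F_T(x) = 1 - 11x + 53x^2 - 145x^3 + 248x^4 - 274x^5 + 192x^6 - 80x^7 + 17x^8; that is, F_T(x) = (1-11x+53x^2-145x^3+248x^4-274x^5+192x^6-80x^7+17x^8)/((1-x)^6(1-2x)^3). -/
open PowerSeries

/-- A permutation `π` of `{0,…,n-1}` contains the pattern `σ` (of length `k`) if there is an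
order-embedding of positions on which the values of `π` appear in the same relative order as
the values of `σ`. -/
def ContainsPattern {n k : ℕ} (π : Equiv.Perm (Fin n)) (σ : Fin k → Fin k) : Prop :=
  ∃ f : Fin k ↪o Fin n, ∀ a b : Fin k, σ a < σ b ↔ π (f a) < π (f b)

/-- The number of permutations of length `n` avoiding every pattern in `T`. -/
noncomputable def avoiderCount (T : Set (Fin 4 → Fin 4)) (n : ℕ) : ℕ :=
  Nat.card {π : Equiv.Perm (Fin n) // ∀ σ ∈ T, ¬ ContainsPattern π σ}

/-- The generating function `F_T(x) = ∑_n |S_n(T)| xⁿ` over `ℚ`. -/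
noncomputable def avoiderGF (T : Set (Fin 4 → Fin 4)) : PowerSeries ℚ :=
  PowerSeries.mk fun n => (avoiderCount T n : ℚ)

/-- The generating function of the Catalan numbers over `ℚ`. -/
noncomputable def catalanGF : PowerSeries ℚ :=
  PowerSeries.mk fun n => (catalan n : ℚ)

set_option linter.unreachableTactic false
set_option linter.unusedTactic false

set_option linter.unusedSimpArgs false


def shf (v x : ℕ) : ℕ := if x < v then x else x + 1

def cns {n : ℕ} (v : ℕ) (f : Fin n → ℕ) : Fin (n+1) → ℕ :=
  Fin.cons v (fun i => shf v (f i))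

def Av {n : ℕ} (f : Fin n → ℕ) : Prop :=
  ∀ a b c d : Fin n, a < b → b < c → c < d →
    ¬ (f a < f b ∧ f b < f d ∧ f d < f c) ∧
    ¬ (f c < f a ∧ f a < f b ∧ f b < f d) ∧
    ¬ (f c < f d ∧ f d < f a ∧ f a < f b)

def Act {n : ℕ} (f : Fin n → ℕ) (w : ℕ) : Prop :=
  ∀ b c d : Fin n, b < c → c < d →
    ¬ (w ≤ f b ∧ f b < f d ∧ f d < f c) ∧
    ¬ (f c < w ∧ w ≤ f b ∧ f b < f d) ∧
    ¬ (f c < f d ∧ f d < w ∧ w ≤ f b)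

def Inc {n : ℕ} (f : Fin n → ℕ) (w : ℕ) : Prop :=
  ∀ c d : Fin n, c < d → ¬ (w ≤ f d ∧ f d < f c)

def Dcr {n : ℕ} (f : Fin n → ℕ) (w : ℕ) : Prop :=
  ∀ c d : Fin n, c < d → ¬ (f c < f d ∧ f d < w)

def Pre {n : ℕ} (f : Fin n → ℕ) (v w : ℕ) : Prop :=
  ∀ c d : Fin n, c < d → ¬ (f c < w ∧ v ≤ f d)

lemma shf_lt (v a b : ℕ) : shf v a < shf v b ↔ a < b := by unfold shf; split_ifs <;> omega
lemma shf_lo {v w : ℕ} (h : w ≤ v) (a : ℕ) : shf v a < w ↔ a < w := by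
  unfold shf; split_ifs <;> omega
lemma shf_hi {v w : ℕ} (h : v ≤ w) (a : ℕ) : shf v a < w + 1 ↔ a < w := by
  unfold shf; split_ifs <;> omega
lemma le_shf {v w : ℕ} (h : w ≤ v) (a : ℕ) : w ≤ shf v a ↔ w ≤ a := by
  unfold shf; split_ifs <;> omega
lemma le_shf_hi {v w : ℕ} (h : v ≤ w) (a : ℕ) : w + 1 ≤ shf v a ↔ w ≤ a := by
  unfold shf; split_ifs <;> omega
lemma lt_shf (v a : ℕ) : v < shf v a ↔ v ≤ a := by
  unfold shf; split_ifs <;> omega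

section
variable {n : ℕ} (f : Fin n → ℕ) (v w : ℕ)

lemma Av_cns : Av (cns v f) ↔ Av f ∧ Act f v := by
  simp only [Av, Act, cns, Fin.forall_fin_succ, Fin.cons_zero, Fin.cons_succ, Fin.succ_lt_succ_iff,
    shf_lt, lt_shf, shf_lo le_rfl, Fin.not_lt_zero, Fin.succ_pos, false_imp_iff, true_imp_iff,
    imp_true_iff, true_and, and_true, lt_irrefl]
  tauto

lemma Act_lo (h : w ≤ v) : Act (cns v f) w ↔ Act f w ∧ Inc f v ∧ Pre f v w ∧ Dcr f w := by
  simp only [Act, Inc, Dcr, Pre, cns, Fin.forall_fin_succ, Fin.cons_zero, Fin.cons_succ, Fin.succ_lt_succ_iff,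
    shf_lt, lt_shf, shf_lo h, le_shf h, h, Fin.not_lt_zero, Fin.succ_pos, false_imp_iff, true_imp_iff,
    imp_true_iff, true_and, and_true, lt_irrefl]
  constructor
  · rintro ⟨h1, h2⟩
    exact ⟨h2, fun c d k => (h1 c d k).1, fun c d k => (h1 c d k).2.1, fun c d k => (h1 c d k).2.2⟩
  · rintro ⟨h2, h3, h4, h5⟩
    exact ⟨fun c d k => ⟨h3 c d k, h4 c d k, h5 c d k⟩, h2⟩

lemma Act_hi (h : v ≤ w) : Act (cns v f) (w+1) ↔ Act f w := by
  have h' : ¬ (w + 1 ≤ v) := by omega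
  simp only [Act, cns, Fin.forall_fin_succ, Fin.cons_zero, Fin.cons_succ, Fin.succ_lt_succ_iff,
    shf_lt, lt_shf, shf_hi h, le_shf_hi h, h', Fin.not_lt_zero, Fin.succ_pos, false_imp_iff, true_imp_iff,
    imp_true_iff, true_and, and_true, false_and, and_false, not_false_eq_true, lt_irrefl]

lemma Inc_lo (h : w < v) (hf : ∃ i, f i = w) : ¬ Inc (cns v f) w := by
  obtain ⟨i, hi⟩ := hf
  intro H
  have := H 0 i.succ (Fin.succ_pos _)
  simp [cns, shf, hi, h] at this

lemma Inc_mid : Inc (cns v f) v ↔ Inc f v := by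
  simp only [Inc, cns, Fin.forall_fin_succ, Fin.cons_zero, Fin.cons_succ, Fin.succ_lt_succ_iff,
    shf_lt, lt_shf, le_shf le_rfl, shf_lo le_rfl, Fin.not_lt_zero, Fin.succ_pos, false_imp_iff, true_imp_iff,
    imp_true_iff, true_and, and_true, false_and, and_false, not_false_eq_true, lt_irrefl]
  simp only [and_iff_right_iff_imp]
  intros; omega

lemma Inc_hi (h : v ≤ w) : Inc (cns v f) (w+1) ↔ Inc f w := by
  simp only [Inc, cns, Fin.forall_fin_succ, Fin.cons_zero, Fin.cons_succ, Fin.succ_lt_succ_iff,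
    shf_lt, le_shf_hi h, shf_lo le_rfl, Fin.not_lt_zero, Fin.succ_pos, false_imp_iff, true_imp_iff,
    imp_true_iff, true_and, and_true, false_and, and_false, not_false_eq_true, lt_irrefl]
  simp only [and_iff_right_iff_imp]
  intros; omega

lemma Dcr_lo (h : w ≤ v) : Dcr (cns v f) w ↔ Dcr f w := by
  simp only [Dcr, cns, Fin.forall_fin_succ, Fin.cons_zero, Fin.cons_succ, Fin.succ_lt_succ_iff,
    shf_lt, shf_lo h, lt_shf, Fin.not_lt_zero, Fin.succ_pos, false_imp_iff, true_imp_iff,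
    imp_true_iff, true_and, and_true, false_and, and_false, not_false_eq_true, lt_irrefl]
  simp only [and_iff_right_iff_imp]
  intros; omega

lemma Dcr_mid : Dcr (cns v f) (v+1) ↔ Dcr f v := by
  simp only [Dcr, cns, Fin.forall_fin_succ, Fin.cons_zero, Fin.cons_succ, Fin.succ_lt_succ_iff,
    shf_lt, shf_hi le_rfl, lt_shf, Fin.not_lt_zero, Fin.succ_pos, false_imp_iff, true_imp_iff,
    imp_true_iff, true_and, and_true, false_and, and_false, not_false_eq_true, lt_irrefl]
  simp only [and_iff_right_iff_imp]
  intros; omega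

lemma Dcr_hi (h : v < w) (hf : ∃ i, f i = v) : ¬ Dcr (cns v f) (w+1) := by
  obtain ⟨i, hi⟩ := hf
  intro H
  have := H 0 i.succ (Fin.succ_pos _)
  simp [cns, shf, hi] at this
  omega

lemma Pre_lo (u : ℕ) (h : w ≤ v) (h' : u ≤ v) : Pre (cns v f) u w ↔ Pre f u w := by
  have h2 : ¬ (v < w) := by omega
  simp only [Pre, cns, Fin.forall_fin_succ, Fin.cons_zero, Fin.cons_succ, Fin.succ_lt_succ_iff,
    shf_lo h, le_shf h', h2, Fin.not_lt_zero, Fin.succ_pos, false_imp_iff, true_imp_iff,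
    imp_true_iff, true_and, and_true, false_and, and_false, not_false_eq_true, lt_irrefl]

lemma Pre_mid (u : ℕ) (h : w ≤ v) (h' : v ≤ u) : Pre (cns v f) (u+1) w ↔ Pre f u w := by
  have h2 : ¬ (v < w) := by omega
  simp only [Pre, cns, Fin.forall_fin_succ, Fin.cons_zero, Fin.cons_succ, Fin.succ_lt_succ_iff,
    shf_lo h, le_shf_hi h', h2, Fin.not_lt_zero, Fin.succ_pos, false_imp_iff, true_imp_iff,
    imp_true_iff, true_and, and_true, false_and, and_false, not_false_eq_true, lt_irrefl]

lemma Pre_hi (u : ℕ) (h : v ≤ w) (h' : v ≤ u) (hf : ∃ i, f i = u) : ¬ Pre (cns v f) (u+1) (w+1) := by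
  obtain ⟨i, hi⟩ := hf
  intro H
  have := H 0 i.succ (Fin.succ_pos _)
  simp [cns, shf, hi] at this
  split_ifs at this <;> omega

lemma Pre_mono {u u' : ℕ} (h : u ≤ u') (H : Pre f u w) : Pre f u' w :=
  fun c d k q => H c d k ⟨q.1, h.trans q.2⟩

def IsP : Prop := (∀ i, f i < n) ∧ ∀ u < n, ∃ i, f i = u

lemma IsP_cns (h : IsP f) (hv : v ≤ n) : IsP (cns v f) := by
  refine ⟨fun i => ?_, fun u hu => ?_⟩
  · refine Fin.cases ?_ (fun i => ?_) i
    · simp [cns]; omega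
    · have := h.1 i
      simp [cns, shf]; split_ifs <;> omega
  · rcases lt_trichotomy u v with h1 | h1 | h1
    · obtain ⟨i, hi⟩ := h.2 u (by omega)
      exact ⟨i.succ, by simp [cns, shf, hi, h1]⟩
    · exact ⟨0, by simp [cns, h1]⟩
    · obtain ⟨i, hi⟩ := h.2 (u-1) (by omega)
      exact ⟨i.succ, by simp [cns, shf, hi]; split_ifs <;> omega⟩

lemma Pre_top (h : IsP f) (w : ℕ) : Pre f n w := by
  intro c d _ q
  have := h.1 d
  omega
end

structure Cfg {n : ℕ} (f : Fin n → ℕ) (s : ℕ → ℕ) (K δ ι ρ : ℕ) : Prop where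
  mono : StrictMono s
  top : s K = n
  act : ∀ w ≤ n, (Act f w ↔ ∃ i ≤ K, s i = w)
  dcr : ∀ i ≤ K, (Dcr f (s i) ↔ i < δ)
  inc : ∀ i ≤ K, (Inc f (s i) ↔ ι ≤ i)
  pre : ∀ i ≤ K, ι ≤ i → ∀ j ≤ i, (Dcr f (s j) ∧ Pre f (s i) (s j) ↔ j < if i = K then δ else ρ)
  le1 : ρ ≤ δ
  le2 : δ ≤ K + 1
  le3 : ρ ≤ ι + 1

def rr (K δ ι ρ i : ℕ) : ℕ := if i < ι then 0 else if i = K then δ else ρ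
def ii (K δ ι ρ i : ℕ) : ℕ :=
  if i < ι then ι - i else if rr K δ ι ρ i = i + 1 then i else rr K δ ι ρ i
def dd (K δ ι ρ i : ℕ) : ℕ := rr K δ ι ρ i + if i < δ then 1 else 0
def kk (K δ ι ρ i : ℕ) : ℕ := rr K δ ι ρ i + (K - i)

lemma Cfg.step {n : ℕ} {f : Fin n → ℕ} {s : ℕ → ℕ} {K δ ι ρ : ℕ} (hP : IsP f)
    (h : Cfg f s K δ ι ρ) {i : ℕ} (hi : i ≤ K) :
    Cfg (cns (s i) f)
      (fun j => if j < rr K δ ι ρ i then s j else s (i + (j - rr K δ ι ρ i)) + 1)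
      (kk K δ ι ρ i) (dd K δ ι ρ i) (ii K δ ι ρ i) (rr K δ ι ρ i) := by
  have hR1 : rr K δ ι ρ i ≤ i + 1 := by
    have := h.le2; have := h.le3
    unfold rr; split_ifs <;> omega
  have hR2 : i < ι → rr K δ ι ρ i = 0 := fun q => by simp [rr, q]
  have key : ∀ j ≤ i, (Inc f (s i) ∧ Pre f (s i) (s j) ∧ Dcr f (s j)) ↔ j < rr K δ ι ρ i := by
    intro j hj
    rw [h.inc i hi]
    by_cases q : i < ι
    · simp [hR2 q]; omega
    · have := h.pre i hi (by omega) j hj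
      simp only [rr, q, if_false]
      rw [← this]
      constructor
      · rintro ⟨_, a, b⟩; exact ⟨b, a⟩
      · rintro ⟨a, b⟩; exact ⟨by omega, b, a⟩
  have hI1 : i < ι → ii K δ ι ρ i = ι - i := fun q => by simp [ii, q]
  have hI2 : ι ≤ i → ii K δ ι ρ i = if rr K δ ι ρ i = i + 1 then i else rr K δ ι ρ i :=
    fun q => by simp only [ii, if_neg (not_lt.2 q)]
  have hD : dd K δ ι ρ i = rr K δ ι ρ i + if i < δ then 1 else 0 := rfl
  have hK : kk K δ ι ρ i = rr K δ ι ρ i + (K - i) := rfl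
  generalize rr K δ ι ρ i = R at *
  generalize ii K δ ι ρ i = I' at *
  generalize dd K δ ι ρ i = D' at *
  generalize kk K δ ι ρ i = K' at *
  have hle : ∀ {a b}, s a ≤ s b ↔ a ≤ b := h.mono.le_iff_le
  have hlt : ∀ {a b}, s a < s b ↔ a < b := h.mono.lt_iff_lt
  have hsn : ∀ {a}, s a < n ↔ a < K := by intro a; rw [← h.top]; exact hlt
  have hvn : s i ≤ n := by rw [← h.top]; exact hle.2 hi
  have hP' := IsP_cns f (s i) hP hvn
  -- decreasing part
  have hdcr : ∀ j ≤ K', (Dcr (cns (s i) f) (if j < R then s j else s (i + (j - R)) + 1) ↔ j < D') := by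
    intro j hj
    split_ifs with q
    · rw [Dcr_lo _ _ _ (hle.2 (by omega))]
      have := ((key j (by omega)).2 q).2.2
      simp only [this, true_iff]; omega
    · rcases eq_or_lt_of_le (not_lt.1 q) with q' | q'
      · subst q'
        simp only [Nat.sub_self, Nat.add_zero]
        rw [Dcr_mid, h.dcr i hi, hD]
        split_ifs <;> omega
      · have h1 : s i < s (i + (j - R)) := hlt.2 (by omega)
        have h2 : s i < n := hsn.2 (by omega)
        have := Dcr_hi f (s i) (s (i + (j-R))) h1 (hP.2 _ h2)
        simp only [this, false_iff]
        split_ifs at hD <;> omega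
  refine ⟨?_, ?_, ?_, hdcr, ?_, ?_, ?_, ?_, ?_⟩
  · refine strictMono_nat_of_lt_succ (fun j => ?_)
    split_ifs with a b b
    · exact hlt.2 (by omega)
    · have : s j ≤ s (i + (j + 1 - R)) := hle.2 (by omega)
      omega
    · omega
    · have : s (i + (j - R)) < s (i + (j + 1 - R)) := hlt.2 (by omega)
      omega
  · rw [if_neg (by omega), ← h.top]
    congr 2; omega
  · intro w hw
    by_cases q : w ≤ s i
    · rw [Act_lo _ _ _ q, h.act w (by omega)]
      constructor
      · rintro ⟨⟨j, hj, rfl⟩, H⟩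
        have hji := hle.1 q
        have := (key j hji).1 H
        exact ⟨j, by omega, by simp [this]⟩
      · rintro ⟨j, hj, H⟩
        split_ifs at H with q'
        · subst H
          exact ⟨⟨j, by omega, rfl⟩, (key j (by omega)).2 q'⟩
        · have : s i ≤ s (i + (j - R)) := hle.2 (by omega)
          omega
    · obtain ⟨w, rfl⟩ : ∃ u, w = u + 1 := ⟨w - 1, by omega⟩
      rw [Act_hi _ _ _ (by omega), h.act w (by omega)]
      constructor
      · rintro ⟨j, hj, rfl⟩
        have hij : i ≤ j := hle.1 (by omega)
        refine ⟨R + (j - i), by omega, ?_⟩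
        rw [if_neg (by omega)]
        congr 2; omega
      · rintro ⟨j, hj, H⟩
        split_ifs at H with q'
        · have : s j ≤ s i := hle.2 (by omega)
          omega
        · exact ⟨i + (j - R), by omega, by omega⟩
  · intro j hj
    split_ifs with q
    · have q2 : ι ≤ i := by by_contra q2; have := hR2 (by omega); omega
      have hI := hI2 q2
      rcases eq_or_lt_of_le (show j ≤ i by omega) with q' | q'
      · subst q'
        rw [Inc_mid, h.inc j hi]
        rw [if_pos (by omega)] at hI
        omega
      · have h1 : s j < s i := hlt.2 q'
        have := Inc_lo f (s i) (s j) h1 (hP.2 _ (by omega))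
        simp only [this, false_iff]
        split_ifs at hI <;> omega
    · rw [Inc_hi _ _ _ (hle.2 (by omega)), h.inc _ (by omega)]
      by_cases q2 : i < ι
      · have := hR2 q2; have := hI1 q2; omega
      · have := hI2 (by omega); split_ifs at this <;> omega
  · intro j1 hj1 hI j2 hj2
    rw [hdcr j2 (by omega)]
    by_cases q : j1 < R
    · have q2 : ι ≤ i := by by_contra q2; have := hR2 (by omega); omega
      have hI' := hI2 q2
      have hR : R = i + 1 := by by_contra H; rw [if_neg H] at hI'; omega
      rw [if_pos hR] at hI'
      obtain rfl : j1 = i := by omega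
      have a1 : j2 < R := by omega
      rw [if_pos q, if_pos a1, if_neg (by omega), Pre_lo _ _ _ _ (hle.2 hj2) le_rfl]
      have := ((key j2 hj2).2 a1).2.1
      simp only [this, and_true]; omega
    · rw [if_neg q]
      by_cases q2 : j2 < R
      · rw [if_pos q2, Pre_mid _ _ _ _ (hle.2 (by omega)) (hle.2 (by omega))]
        have := Pre_mono f _ (hle.2 (show i ≤ i + (j1 - R) by omega)) ((key j2 (by omega)).2 q2).2.1
        simp only [this, and_true]
        split_ifs <;> omega
      · rw [if_neg q2]
        by_cases q3 : j1 = K'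
        · rw [if_pos q3]
          have e : s (i + (j1 - R)) = n := by
            rw [← h.top]; congr 1; omega
          rw [e]
          have := Pre_top _ hP' (s (i + (j2 - R)) + 1)
          simp only [this, and_true]
        · rw [if_neg q3]
          have := Pre_hi f (s i) (s (i + (j2 - R))) (s (i + (j1 - R))) (hle.2 (by omega))
            (hle.2 (by omega)) (hP.2 _ (hsn.2 (by omega)))
          simp only [this, and_false, false_iff]; exact q2
  · omega
  · rw [hD, hK]; split_ifs <;> have := h.le2 <;> omega
  · by_cases q2 : i < ι
    · have := hR2 q2; omega
    · have := hI2 (by omega); split_ifs at this <;> omega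

open Classical in
noncomputable def NN : ℕ → {n : ℕ} → (Fin n → ℕ) → ℕ
  | 0, _, _ => 1
  | m+1, n, f => ∑ v ∈ (Finset.range (n+1)).filter (Act f), NN m (cns v f)

def MM : ℕ → ℕ → ℕ → ℕ → ℕ → ℕ
  | 0, _, _, _, _ => 1
  | m+1, K, δ, ι, ρ => ∑ i ∈ Finset.range (K+1),
      MM m (kk K δ ι ρ i) (dd K δ ι ρ i) (ii K δ ι ρ i) (rr K δ ι ρ i)

lemma NN_eq (m : ℕ) : ∀ {n : ℕ} {f : Fin n → ℕ} {s : ℕ → ℕ} {K δ ι ρ : ℕ}, IsP f →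
    Cfg f s K δ ι ρ → NN m f = MM m K δ ι ρ := by
  classical
  induction m with
  | zero => intros; rfl
  | succ m ih =>
    intro n f s K δ ι ρ hP h
    have hle : ∀ {a b}, s a ≤ s b ↔ a ≤ b := h.mono.le_iff_le
    have e : (Finset.range (n+1)).filter (Act f) = (Finset.range (K+1)).image s := by
      ext w
      simp only [Finset.mem_filter, Finset.mem_range, Finset.mem_image, Nat.lt_succ_iff]
      constructor
      · rintro ⟨a, b⟩; exact (h.act w a).1 b
      · rintro ⟨i, a, rfl⟩
        have : s i ≤ n := by rw [← h.top]; exact hle.2 a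
        exact ⟨this, (h.act _ this).2 ⟨i, a, rfl⟩⟩
    have e1 : NN (m+1) f = ∑ v ∈ (Finset.range (n+1)).filter (Act f), NN m (cns v f) := by
      simp only [NN]
    rw [e1, e, Finset.sum_image (fun a _ b _ q => h.mono.injective q), MM]
    refine Finset.sum_congr rfl (fun i hi => ?_)
    have hi' : i ≤ K := by simpa [Nat.lt_succ_iff] using hi
    have : s i ≤ n := by rw [← h.top]; exact hle.2 hi'
    exact ih (IsP_cns f _ hP this) (h.step hP hi')

lemma Cfg_empty (f : Fin 0 → ℕ) : Cfg f id 0 1 0 0 := by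
  refine ⟨strictMono_id, rfl, ?_, ?_, ?_, ?_, by omega, by omega, by omega⟩
  · intro w hw
    simp [Act]; omega
  · intro i hi; simp [Dcr]; omega
  · intro i hi; simp [Inc]
  · intro i hi _ j hj; simp [Dcr, Pre, Nat.le_zero.1 hi]; omega

lemma NN_empty (m : ℕ) (f : Fin 0 → ℕ) : NN m f = MM m 0 1 0 0 :=
  NN_eq m ⟨fun i => i.elim0, fun u hu => by omega⟩ (Cfg_empty f)

def vv {n : ℕ} (π : Equiv.Perm (Fin n)) : Fin n → ℕ := fun i => (π i : ℕ)

lemma vv_inj {n : ℕ} {π π' : Equiv.Perm (Fin n)} (h : vv π = vv π') : π = π' := by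
  ext i; exact congrFun h i

noncomputable def cp {n : ℕ} (x : Fin (n+1) × Equiv.Perm (Fin n)) : Equiv.Perm (Fin (n+1)) :=
  Equiv.ofBijective (Fin.cons x.1 (fun i => x.1.succAbove (x.2 i)) : Fin (n+1) → Fin (n+1)) (by
    rw [← Finite.injective_iff_bijective, Fin.cons_injective_iff]
    refine ⟨?_, fun a b h => x.2.injective (Fin.succAbove_right_injective h)⟩
    rintro ⟨i, hi⟩
    exact Fin.succAbove_ne _ _ hi)

lemma vv_cp {n : ℕ} (x : Fin (n+1) × Equiv.Perm (Fin n)) : vv (cp x) = cns x.1 (vv x.2) := by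
  funext i
  refine Fin.cases ?_ (fun i => ?_) i
  · simp [vv, cp, cns]
  · simp only [vv, cp, cns, Equiv.ofBijective_apply, Fin.cons_succ, shf, Fin.succAbove,
      Fin.lt_def, Fin.val_castSucc]
    split_ifs <;> simp [*]

lemma cns_inj {n : ℕ} {v v' : ℕ} {f f' : Fin n → ℕ} (h : cns v f = cns v' f') : v = v' ∧ f = f' := by
  have h0 := congrFun h 0
  simp only [cns, Fin.cons_zero] at h0
  subst h0
  refine ⟨rfl, funext fun i => ?_⟩
  have := congrFun h i.succ
  simp only [cns, Fin.cons_succ] at this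
  have a := shf_lt v (f i) (f' i)
  have b := shf_lt v (f' i) (f i)
  rw [this] at a b
  simp at a b; omega

lemma cp_bij (n : ℕ) : Function.Bijective (cp (n := n)) := by
  rw [Fintype.bijective_iff_injective_and_card]
  constructor
  · rintro ⟨v, π⟩ ⟨v', π'⟩ h
    have := cns_inj ((vv_cp (v, π)).symm.trans ((congrArg vv h).trans (vv_cp (v', π'))))
    simp only at this
    rw [Prod.mk.injEq]
    exact ⟨Fin.ext this.1, vv_inj this.2⟩
  · simp [Fintype.card_perm, Nat.factorial_succ]

open Classical in
lemma count_aux (m : ℕ) : ∀ n k : ℕ, k = n + m →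
    (Finset.univ.filter (fun π : Equiv.Perm (Fin k) => Av (vv π))).card =
    ∑ π : Equiv.Perm (Fin n), if Av (vv π) then NN m (vv π) else 0 := by
  induction m with
  | zero =>
    rintro n k rfl
    simp [NN]
  | succ m ih =>
    intro n k hk
    rw [ih (n+1) k (by omega), ← (cp_bij n).sum_comp, Fintype.sum_prod_type_right]
    refine Finset.sum_congr rfl (fun π _ => ?_)
    simp only [vv_cp, Av_cns]
    split_ifs with h
    · have e1 : NN (m+1) (vv π) =
          ∑ v ∈ (Finset.range (n+1)).filter (Act (vv π)), NN m (cns v (vv π)) := by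
        simp only [NN]
      rw [e1, Finset.sum_filter, Finset.sum_range]
      simp [h]
    · simp [h]

lemma contains_iff {n : ℕ} (π : Equiv.Perm (Fin n)) (σ : Fin 4 → Fin 4) :
    ContainsPattern π σ ↔ ∃ a b c d : Fin n, a < b ∧ b < c ∧ c < d ∧
      ∀ i j : Fin 4, σ i < σ j ↔ vv π (![a,b,c,d] i) < vv π (![a,b,c,d] j) := by
  constructor
  · rintro ⟨f, hf⟩
    refine ⟨f 0, f 1, f 2, f 3, f.strictMono (by decide), f.strictMono (by decide),
      f.strictMono (by decide), ?_⟩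
    have e : ![f 0, f 1, f 2, f 3] = f := by funext i; fin_cases i <;> rfl
    rw [e]
    intro i j
    rw [hf i j]; rfl
  · rintro ⟨a, b, c, d, h1, h2, h3, H⟩
    have hm : StrictMono ![a,b,c,d] := by
      rw [Fin.strictMono_iff_lt_succ]
      intro i
      fin_cases i
      · exact h1
      · exact h2
      · exact h3
    exact ⟨OrderEmbedding.ofStrictMono _ hm, fun i j => (H i j)⟩

lemma avoid_iff {n : ℕ} (π : Equiv.Perm (Fin n)) :
    (∀ σ ∈ ({![0,1,3,2], ![1,2,0,3], ![2,3,0,1]} : Set (Fin 4 → Fin 4)), ¬ ContainsPattern π σ)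
      ↔ Av (vv π) := by
  simp only [Set.mem_insert_iff, Set.mem_singleton_iff, forall_eq_or_imp, forall_eq, contains_iff]
  constructor
  · rintro ⟨H1, H2, H3⟩ a b c d h1 h2 h3
    refine ⟨fun q => H1 ⟨a, b, c, d, h1, h2, h3, ?_⟩, fun q => H2 ⟨a, b, c, d, h1, h2, h3, ?_⟩,
      fun q => H3 ⟨a, b, c, d, h1, h2, h3, ?_⟩⟩ <;>
    · simp [Fin.forall_fin_succ]
      omega
  · intro H
    refine ⟨?_, ?_, ?_⟩
    · rintro ⟨a, b, c, d, h1, h2, h3, q⟩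
      exact (H a b c d h1 h2 h3).1 ⟨(q 0 1).1 (by decide), (q 1 3).1 (by decide), (q 3 2).1 (by decide)⟩
    · rintro ⟨a, b, c, d, h1, h2, h3, q⟩
      exact (H a b c d h1 h2 h3).2.1 ⟨(q 2 0).1 (by decide), (q 0 1).1 (by decide), (q 1 3).1 (by decide)⟩
    · rintro ⟨a, b, c, d, h1, h2, h3, q⟩
      exact (H a b c d h1 h2 h3).2.2 ⟨(q 2 3).1 (by decide), (q 3 0).1 (by decide), (q 0 1).1 (by decide)⟩

lemma count_eq (m : ℕ) :
    avoiderCount ({![0,1,3,2], ![1,2,0,3], ![2,3,0,1]} : Set (Fin 4 → Fin 4)) m = MM m 0 1 0 0 := by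
  classical
  unfold avoiderCount
  simp only [avoid_iff]
  rw [Nat.card_eq_fintype_card, Fintype.card_subtype, count_aux m 0 m (by omega)]
  rw [Fintype.sum_unique, if_pos, NN_empty]
  intro a; exact a.elim0

lemma MM_congr {m a b c d a' b' c' d' : ℕ} (h1 : a = a') (h2 : b = b') (h3 : c = c') (h4 : d = d') :
    MM m a b c d = MM m a' b' c' d' := by subst h1 h2 h3 h4; rfl

lemma sum_refl (n : ℕ) (f g : ℕ → ℕ) (h : ∀ i < n, f i = g (n - 1 - i)) :
    ∑ i ∈ Finset.range n, f i = ∑ i ∈ Finset.range n, g i := by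
  rw [← Finset.sum_range_reflect g]
  exact Finset.sum_congr rfl (fun i hi => h i (Finset.mem_range.1 hi))

lemma stepE (m p d : ℕ) : MM (m+1) (p+d) p p p =
    ∑ j ∈ Finset.range p, MM m (1+j+d) 1 (1+j) 0 + ∑ t ∈ Finset.range (d+1), MM m (p+t) p p p := by
  rw [MM, add_assoc p d 1, Finset.sum_range_add]
  congr 1 <;> refine sum_refl _ _ _ (fun i hi => MM_congr ?_ ?_ ?_ ?_) <;>
    simp only [kk, dd, ii, rr] <;> first | (split_ifs <;> omega) | grind

lemma stepH (m c d : ℕ) : MM (m+1) (c+d) 0 c 0 =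
    ∑ j ∈ Finset.range c, MM m (j+1+d) 0 (j+1) 0 + ∑ t ∈ Finset.range (d+1), MM m (0+t) 0 0 0 := by
  rw [MM, add_assoc c d 1, Finset.sum_range_add]
  congr 1 <;> refine sum_refl _ _ _ (fun i hi => MM_congr ?_ ?_ ?_ ?_) <;>
    simp only [kk, dd, ii, rr] <;> first | (split_ifs <;> omega) | grind

lemma stepG (m c d : ℕ) : MM (m+1) (1+c+d) 1 (1+c) 0 = MM m (1+c+d) 1 (1+c) 0 +
    ∑ j ∈ Finset.range c, MM m (j+1+d) 0 (j+1) 0 +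
    (∑ t ∈ Finset.range d, MM m (0+(t+1)) 0 0 0 + MM m (1+0) 1 1 1) := by
  rw [MM, add_assoc (1+c) d 1, Finset.sum_range_add, Finset.sum_range_add _ 1 c,
    Finset.sum_range_succ _ d, Finset.sum_range_one]
  congr 1
  · congr 1
    · refine MM_congr ?_ ?_ ?_ ?_ <;>
        simp only [kk, dd, ii, rr] <;> first | (split_ifs <;> omega) | grind
    · refine sum_refl _ _ _ (fun i hi => MM_congr ?_ ?_ ?_ ?_) <;>
        simp only [kk, dd, ii, rr] <;> first | (split_ifs <;> omega) | grind
  · congr 1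
    · refine sum_refl _ _ _ (fun i hi => MM_congr ?_ ?_ ?_ ?_) <;>
        simp only [kk, dd, ii, rr] <;> first | (split_ifs <;> omega) | grind
    · refine MM_congr ?_ ?_ ?_ ?_ <;>
        simp only [kk, dd, ii, rr] <;> first | (split_ifs <;> omega) | grind

lemma stepQ (m p q : ℕ) : MM (m+1) (p+q+1) (p+1) p p =
    ∑ j ∈ Finset.range p, MM m (1+j+(q+1)) 1 (1+j) 0 + MM m (p+q+1) (p+1) p p +
    (∑ t ∈ Finset.range q, MM m (p+(t+1)) p p p + MM m (p+1+0) (p+1) (p+1) (p+1)) := by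
  rw [MM, show p+q+1+1 = (p+1)+(q+1) by ring, Finset.sum_range_add, Finset.sum_range_succ _ p,
    Finset.sum_range_succ _ q]
  congr 1
  · congr 1
    · refine sum_refl _ _ _ (fun i hi => MM_congr ?_ ?_ ?_ ?_) <;>
        simp only [kk, dd, ii, rr] <;> first | (split_ifs <;> omega) | grind
    · refine MM_congr ?_ ?_ ?_ ?_ <;>
        simp only [kk, dd, ii, rr] <;> first | (split_ifs <;> omega) | grind
  · congr 1
    · refine sum_refl _ _ _ (fun i hi => MM_congr ?_ ?_ ?_ ?_) <;>
        simp only [kk, dd, ii, rr] <;> first | (split_ifs <;> omega) | grind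
    · refine MM_congr ?_ ?_ ?_ ?_ <;>
        simp only [kk, dd, ii, rr] <;> first | (split_ifs <;> omega) | grind

lemma stepR (m p q : ℕ) : MM (m+1) (p+q+2) (p+2) p (p+1) =
    ∑ j ∈ Finset.range p, MM m (1+j+(q+2)) 1 (1+j) 0 + MM m (p+(q+1)+2) (p+2) p (p+1) +
    MM m (p+1+q+1) (p+1+1) (p+1) (p+1) +
    (∑ t ∈ Finset.range q, MM m (p+1+(t+1)) (p+1) (p+1) (p+1) + MM m (p+2+0) (p+2) (p+2) (p+2)) := by
  rw [MM, show p+q+2+1 = (p+1+1)+(q+1) by ring, Finset.sum_range_add, Finset.sum_range_succ _ (p+1),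
    Finset.sum_range_succ _ p, Finset.sum_range_succ _ q]
  congr 1
  · congr 1
    · congr 1
      · refine sum_refl _ _ _ (fun i hi => MM_congr ?_ ?_ ?_ ?_) <;>
          simp only [kk, dd, ii, rr] <;> first | (split_ifs <;> omega) | grind
      · refine MM_congr ?_ ?_ ?_ ?_ <;>
          simp only [kk, dd, ii, rr] <;> first | (split_ifs <;> omega) | grind
    · refine MM_congr ?_ ?_ ?_ ?_ <;>
        simp only [kk, dd, ii, rr] <;> first | (split_ifs <;> omega) | grind
  · congr 1
    · refine sum_refl _ _ _ (fun i hi => MM_congr ?_ ?_ ?_ ?_) <;>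
        simp only [kk, dd, ii, rr] <;> first | (split_ifs <;> omega) | grind
    · refine MM_congr ?_ ?_ ?_ ?_ <;>
        simp only [kk, dd, ii, rr] <;> first | (split_ifs <;> omega) | grind

lemma stepD (m p : ℕ) : MM (m+1) (p+1) (p+2) p (p+1) =
    ∑ j ∈ Finset.range p, MM m (1+j+1) 1 (1+j) 0 + MM m (p+0+2) (p+2) p (p+1) +
    MM m (p+1+1) (p+1+2) (p+1) (p+1+1) := by
  rw [MM, Finset.sum_range_succ _ (p+1), Finset.sum_range_succ _ p]
  congr 1
  · congr 1
    · refine sum_refl _ _ _ (fun i hi => MM_congr ?_ ?_ ?_ ?_) <;>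
        simp only [kk, dd, ii, rr] <;> first | (split_ifs <;> omega) | grind
    · refine MM_congr ?_ ?_ ?_ ?_ <;>
        simp only [kk, dd, ii, rr] <;> first | (split_ifs <;> omega) | grind
  · refine MM_congr ?_ ?_ ?_ ?_ <;>
      simp only [kk, dd, ii, rr] <;> first | (split_ifs <;> omega) | grind

lemma step0 (m : ℕ) : MM (m+1) 0 1 0 0 = MM m (0+1) (0+2) 0 (0+1) := by
  rw [MM, Finset.sum_range_one]
  refine MM_congr ?_ ?_ ?_ ?_ <;>
      simp only [kk, dd, ii, rr] <;> first | (split_ifs <;> omega) | grind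

noncomputable def yy : PowerSeries ℚ := (1 - X)⁻¹
noncomputable def zz : PowerSeries ℚ := (1 - 2 * X)⁻¹

lemma hxy : (X : PowerSeries ℚ) * yy = yy - 1 := by
  have : yy * (1 - X) = 1 := PowerSeries.inv_mul_cancel _ (by simp)
  linear_combination -this

lemma hxz : 2 * (X : PowerSeries ℚ) * zz = zz - 1 := by
  have : zz * (1 - 2 * X) = 1 := PowerSeries.inv_mul_cancel _ (by simp)
  linear_combination -this

lemma hyz : yy * zz = 2 * zz - yy := by
  linear_combination yy * hxz - (2 * zz) * hxy

noncomputable def kK : PowerSeries ℚ := X^2 * yy^2 * zz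

noncomputable def fE (p d : ℕ) : PowerSeries ℚ :=
  yy^(d+1) * (1 + yy * (yy^p - 1) + (p : PowerSeries ℚ) * X * kK) + (d : PowerSeries ℚ) * X * yy^(d+2) * (yy^p - 1)
noncomputable def fH (c d : ℕ) : PowerSeries ℚ := yy^(c+d+1)
noncomputable def fG (c d : ℕ) : PowerSeries ℚ := yy^(c+d+2) + kK
noncomputable def fQ (p q : ℕ) : PowerSeries ℚ :=
  fE p (q+1) + X^2 * yy^2 * (yy^2 * yy^p + kK)
noncomputable def fB (p : ℕ) : PowerSeries ℚ := X * yy * zz * (yy * yy^p - 1)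
noncomputable def fA (p : ℕ) : PowerSeries ℚ :=
  zz * (1 - X * yy + yy * (yy * yy^p - 1) + ((p : PowerSeries ℚ) + 1) * X * kK + X * fB p)
noncomputable def fR (p q : ℕ) : PowerSeries ℚ :=
  yy^(q+1) * (fA p + fB p * ((q : PowerSeries ℚ)+1)) + yy * (-X * kK + X^2 * yy^2 * (yy^3 * yy^p + kK))
noncomputable def h1 : PowerSeries ℚ :=
  yy^2 + X * yy * (zz * (yy^2 + X^2 * yy^2 * zz) + X * yy^2 * zz) + X * X^2 * yy^6
noncomputable def h2 : PowerSeries ℚ := X * kK + X * yy * zz * X * kK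
noncomputable def h0 : PowerSeries ℚ :=
  1 - yy^2 + X * yy * (zz * (1 - X * yy - yy + X * kK - X^2 * yy * zz) - X * yy * zz)
    + X * yy * (-X * kK + X^2 * yy^2 * kK)
noncomputable def fD (p : ℕ) : PowerSeries ℚ :=
  h1 * zz * (1 - X) * yy^p + yy * (h0 + X * (yy * h2)) + yy * h2 * (p : PowerSeries ℚ)

lemma geo (p : ℕ) : X * ∑ j ∈ Finset.range p, yy^(j+1) = yy^p - 1 := by
  induction p with
  | zero => simp
  | succ p ih =>
    rw [Finset.sum_range_succ, mul_add, ih]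
    linear_combination yy^p * hxy

lemma sG (p d : ℕ) : X * ∑ j ∈ Finset.range p, fG j d = yy^(d+1) * (yy^p - 1) + (p : PowerSeries ℚ) * X * kK := by
  rw [← geo]
  simp only [fG, Finset.sum_add_distrib, Finset.mul_sum, Finset.sum_const, Finset.card_range, nsmul_eq_mul, mul_add]
  congr 1
  · exact Finset.sum_congr rfl (fun j _ => by ring)
  · ring

lemma sE (p d : ℕ) : X * ∑ t ∈ Finset.range d, fE p t =
    (1 - X) * fE p d - 1 - yy^(d+1) * (yy^p - 1) - (p : PowerSeries ℚ) * X * kK := by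
  induction d with
  | zero =>
    simp only [Finset.range_zero, Finset.sum_empty, fE]
    generalize yy^p = Y
    push_cast
    linear_combination (1 + yy * (Y - 1) + (p : PowerSeries ℚ) * X * kK) * hxy
  | succ d ih =>
    rw [Finset.sum_range_succ, mul_add, ih]
    simp only [fE, pow_succ]
    generalize yy^p = Y
    generalize yy^d = W
    push_cast
    have := hxy
    generalize kK = K
    grind

lemma fE0 (t : ℕ) : fE 0 t = yy^(t+1) := by simp [fE]

lemma eqE (p d : ℕ) : fE p d = 1 + X * (∑ j ∈ Finset.range p, fG j d + ∑ t ∈ Finset.range (d+1), fE p t) := by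
  rw [Finset.sum_range_succ, mul_add, mul_add, sG, sE]; ring

lemma eqH (c d : ℕ) : fH c d = 1 + X * (∑ j ∈ Finset.range c, fH (j+1) d + ∑ t ∈ Finset.range (d+1), fE 0 t) := by
  simp only [fE0]
  rw [mul_add, geo]
  have : X * ∑ j ∈ Finset.range c, fH (j+1) d = yy^(d+1) * (yy^c - 1) := by
    rw [← geo, Finset.mul_sum, Finset.mul_sum, Finset.mul_sum]
    exact Finset.sum_congr rfl (fun j _ => by simp only [fH]; ring)
  rw [this, fH]; ring

lemma eqG (c d : ℕ) : fG c d = 1 + X * (fG c d + ∑ j ∈ Finset.range c, fH (j+1) d +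
    (∑ t ∈ Finset.range d, fE 0 (t+1) + fE 1 0)) := by
  have h := eqH c d
  rw [Finset.sum_range_succ'] at h
  have e : fE 1 0 = zz := by
    simp [fE, kK]
    have := hxy; have := hxz; have := hyz
    generalize yy = y at *; generalize zz = z at *; generalize (X : PowerSeries ℚ) = x at *
    grind
  have e1 : fG c d = fH c d + X * fG c d + X * (fE 1 0 - fE 0 0) := by
    rw [e, fE0]
    simp only [fG, fH, kK, pow_succ, pow_add]
    have := hxy; have := hxz; have := hyz
    generalize yy^c = Y at *; generalize yy^d = W at *
    generalize yy = y at *; generalize zz = z at *; generalize (X : PowerSeries ℚ) = x at *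
    grind
  linear_combination e1 + h

lemma eqQ (p q : ℕ) : fQ p q = 1 + X * (∑ j ∈ Finset.range p, fG j (q+1) + fQ p q +
    (∑ t ∈ Finset.range q, fE p (t+1) + fE (p+1) 0)) := by
  have h := eqE p (q+1)
  rw [Finset.sum_range_succ, Finset.sum_range_succ'] at h
  have e1 : fQ p q = fE p (q+1) + X * (fQ p q - fE p (q+1)) + X * (fE (p+1) 0 - fE p 0) := by
    rw [fQ]
    simp only [add_sub_cancel_left]
    simp only [fE, pow_succ, pow_add]
    have := hxy
    generalize yy^p = Y at *; generalize yy = y at *; generalize kK = K at *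
    generalize (X : PowerSeries ℚ) = x at *
    push_cast
    grind
  linear_combination e1 + h

lemma eqR (p q : ℕ) : fR p q = 1 + X * (∑ j ∈ Finset.range p, fG j (q+2) + fR p (q+1) +
    fQ (p+1) q + (∑ t ∈ Finset.range q, fE (p+1) (t+1) + fE (p+2) 0)) := by
  have h := sE (p+1) (q+1)
  rw [Finset.sum_range_succ'] at h
  have g := sG p (q+2)
  have e1 : fR p q = 1 + (yy^(q+3) * (yy^p - 1) + (p : PowerSeries ℚ) * X * kK) + X * fR p (q+1) + X * fQ (p+1) q +
    ((1 - X) * fE (p+1) (q+1) - 1 - yy^(q+2) * (yy^(p+1) - 1) - ((p+1 : ℕ) : PowerSeries ℚ) * X * kK)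
    - X * fE (p+1) 0 + X * fE (p+2) 0 := by
    simp only [fR, fQ, fA, fB, fE, pow_succ, pow_add]
    have := hxy; have := hxz; have := hyz
    generalize yy^p = Y at *; generalize yy^q = W at *
    generalize kK = K at *
    generalize yy = y at *; generalize zz = z at *; generalize (X : PowerSeries ℚ) = x at *
    push_cast
    generalize (p : PowerSeries ℚ) = P
    generalize (q : PowerSeries ℚ) = Q
    clear h g; grind
  linear_combination e1 - g - h

lemma eqD (p : ℕ) : fD p = 1 + X * (∑ j ∈ Finset.range p, fG j 1 + fR p 0 + fD (p+1)) := by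
  have g := sG p 1
  have e1 : fD p = 1 + (yy^2 * (yy^p - 1) + (p : PowerSeries ℚ) * X * kK) + X * fR p 0 + X * fD (p+1) := by
    simp only [fD, fR, fA, fB, h1, h2, h0, pow_succ]
    have := hxy; have := hxz; have := hyz
    generalize yy^p = Y at *; 
    generalize kK = K at *
    generalize yy = y at *; generalize zz = z at *; generalize (X : PowerSeries ℚ) = x at *
    push_cast
    generalize (p : PowerSeries ℚ) = P
    clear g; grind
  linear_combination e1 - g

lemma final_id : ((1 : PowerSeries ℚ) - X)^6 * (1 - 2*X)^3 * (1 + X * fD 0) =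
      1 - 11*X + 53*X^2 - 145*X^3 + 248*X^4 - 274*X^5 + 192*X^6 - 80*X^7 + 17*X^8 := by
  simp only [fD, h1, h2, h0, kK]
  have := hxy; have := hxz; have := hyz
  generalize yy = y at *; generalize zz = z at *; generalize (X : PowerSeries ℚ) = x at *
  push_cast
  grind

lemma coeff_aux (m : ℕ) (S : PowerSeries ℚ) : coeff (m+1) (1 + X * S) = coeff m S := by
  rw [map_add, coeff_succ_X_mul, coeff_one]; simp

lemma MM_coeff (m : ℕ) :
    (∀ p d, (MM m (p+d) p p p : ℚ) = coeff m (fE p d)) ∧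
    (∀ c d, (MM m (c+d) 0 c 0 : ℚ) = coeff m (fH c d)) ∧
    (∀ c d, (MM m (1+c+d) 1 (1+c) 0 : ℚ) = coeff m (fG c d)) ∧
    (∀ p q, (MM m (p+q+1) (p+1) p p : ℚ) = coeff m (fQ p q)) ∧
    (∀ p q, (MM m (p+q+2) (p+2) p (p+1) : ℚ) = coeff m (fR p q)) ∧
    (∀ p, (MM m (p+1) (p+2) p (p+1) : ℚ) = coeff m (fD p)) := by
  induction m with
  | zero =>
    refine ⟨fun p d => ?_, fun p d => ?_, fun p d => ?_, fun p d => ?_, fun p d => ?_, fun p => ?_⟩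
    · rw [eqE]; simp [MM]
    · rw [eqH]; simp [MM]
    · rw [eqG]; simp [MM]
    · rw [eqQ]; simp [MM]
    · rw [eqR]; simp [MM]
    · rw [eqD]; simp [MM]
  | succ m ih =>
    obtain ⟨iE, iH, iG, iQ, iR, iD⟩ := ih
    refine ⟨fun p d => ?_, fun p d => ?_, fun p d => ?_, fun p d => ?_, fun p d => ?_, fun p => ?_⟩
    · rw [eqE, coeff_aux, stepE]; push_cast; simp only [iE, iG, map_add, map_sum]
    · rw [eqH, coeff_aux, stepH]; push_cast; simp only [iE, iH, map_add, map_sum]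
    · rw [eqG, coeff_aux, stepG]; push_cast; simp only [iE, iH, iG, map_add, map_sum]; rw [← iE 1 0]
    · rw [eqQ, coeff_aux, stepQ]; push_cast; simp only [iE, iQ, iG, map_add, map_sum]
    · rw [eqR, coeff_aux, stepR]; push_cast; simp only [iE, iQ, iG, iR, map_add, map_sum]
    · rw [eqD, coeff_aux, stepD]; push_cast; simp only [iD, iG, map_add, map_sum]; rw [← iR p 0]

lemma gf_eq : avoiderGF ({![0,1,3,2], ![1,2,0,3], ![2,3,0,1]} : Set (Fin 4 → Fin 4)) =
    1 + X * fD 0 := by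
  ext m
  rw [avoiderGF, coeff_mk, count_eq]
  cases m with
  | zero => simp [MM]
  | succ m => rw [coeff_aux, step0]; exact (MM_coeff m).2.2.2.2.2 0

theorem statement_0 :
    ((1 : PowerSeries ℚ) - X)^6 * (1 - 2*X)^3 * avoiderGF ({![0,1,3,2], ![1,2,0,3], ![2,3,0,1]} : Set (Fin 4 → Fin 4)) =
      1 - 11*X + 53*X^2 - 145*X^3 + 248*X^4 - 274*X^5 + 192*X^6 - 80*X^7 + 17*X^8 := by
  rw [gf_eq]; exact final_id
end

section
/- Let T = {1423, 2341, 3124} (patterns of length 4). Then the generating function for T-avoiders satisfies, as formal power series over ℚ, (1-x)^5·(1-4x+5x^2-3x^3)·F_T(x) = (1 - 9x + 35x^2 - 77x^3 + 107x^4 - 97x^5 + 55x^6 - 17x^7 + x^8)·C(x), where C(x) is the Catalan number generating function. -/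
open PowerSeries

set_option linter.unusedSimpArgs false
namespace TAv

open Equiv

/-- insert a new maximum at position `p` -/
def ins {n : ℕ} (p : Fin (n+1)) (σ : Perm (Fin n)) : Perm (Fin (n+1)) :=
  ((finSuccEquiv' p).trans (optionCongr σ)).trans (finSuccEquiv' (Fin.last n)).symm

@[simp] lemma ins_self {n : ℕ} (p : Fin (n+1)) (σ : Perm (Fin n)) : ins p σ p = Fin.last n := by
  simp [ins]

@[simp] lemma ins_succAbove {n : ℕ} (p : Fin (n+1)) (σ : Perm (Fin n)) (i : Fin n) :
    ins p σ (p.succAbove i) = (σ i).castSucc := by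
  simp [ins]

lemma ins_injective {n : ℕ} :
    Function.Injective (fun x : Fin (n+1) × Perm (Fin n) => ins x.1 x.2) := by
  rintro ⟨p, σ⟩ ⟨q, τ⟩ h
  simp only at h
  have hpq : p = q := by
    apply (ins q τ).injective
    rw [ins_self, ← h, ins_self]
  subst hpq
  congr 1
  ext i
  have := congrArg (fun f => f (p.succAbove i)) h
  simp at this
  rw [this]

lemma ins_bijective {n : ℕ} :
    Function.Bijective (fun x : Fin (n+1) × Perm (Fin n) => ins x.1 x.2) := by
  rw [Fintype.bijective_iff_injective_and_card]
  refine ⟨ins_injective, ?_⟩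
  simp [Fintype.card_perm, Nat.factorial_succ]

/-- number of permutations with a property -/
noncomputable def cnt (n : ℕ) (P : Perm (Fin n) → Prop) : ℕ := Nat.card {σ // P σ}

lemma cnt_congr {n : ℕ} {P Q : Perm (Fin n) → Prop} (h : ∀ σ, P σ ↔ Q σ) : cnt n P = cnt n Q := by
  have : P = Q := funext fun σ => propext (h σ)
  rw [this]

lemma cnt_false {n : ℕ} {P : Perm (Fin n) → Prop} (h : ∀ σ, ¬ P σ) : cnt n P = 0 := by
  unfold cnt
  have : IsEmpty {σ // P σ} := ⟨fun x => h x.1 x.2⟩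
  simp

lemma cnt_split {n : ℕ} (P Q : Perm (Fin n) → Prop) :
    cnt n P = cnt n (fun σ => P σ ∧ Q σ) + cnt n (fun σ => P σ ∧ ¬ Q σ) := by
  classical
  unfold cnt
  simp only [Nat.card_eq_fintype_card, Fintype.card_subtype]
  rw [← Finset.card_filter_add_card_filter_not (s := Finset.univ.filter P) Q]
  simp [Finset.filter_filter]

lemma cnt_succ {n : ℕ} (P : Perm (Fin (n+1)) → Prop) :
    cnt (n+1) P = ∑ p : Fin (n+1), cnt n (fun σ => P (ins p σ)) := by
  unfold cnt
  rw [← Nat.card_sigma]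
  refine Nat.card_congr (Equiv.symm ?_)
  refine Equiv.ofBijective (fun x => ⟨ins x.1 x.2.1, x.2.2⟩) ⟨?_, ?_⟩
  · rintro ⟨p, σ, hσ⟩ ⟨q, τ, hτ⟩ h
    have := ins_injective (a₁ := (p, σ)) (a₂ := (q, τ)) (by simpa using h)
    simp only [Prod.mk.injEq] at this
    obtain ⟨rfl, rfl⟩ := this
    rfl
  · rintro ⟨π, hπ⟩
    obtain ⟨⟨p, σ⟩, rfl⟩ := ins_bijective.2 π
    exact ⟨⟨p, σ, hπ⟩, rfl⟩

lemma cnt_succ' {n : ℕ} (P : Perm (Fin (n+1)) → Prop) (g : ℕ → ℕ)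
    (h : ∀ p : Fin (n+1), cnt n (fun σ => P (ins p σ)) = g p) :
    cnt (n+1) P = ∑ p ∈ Finset.range (n+1), g p := by
  rw [cnt_succ, ← Fin.sum_univ_eq_sum_range]
  exact Finset.sum_congr rfl fun p _ => h p

lemma cnt_zero {P : Perm (Fin 0) → Prop} (h : ∀ σ, P σ) : cnt 0 P = 1 := by
  unfold cnt
  rw [Nat.card_eq_one_iff_unique]
  exact ⟨⟨fun a b => Subtype.ext (Subsingleton.elim _ _)⟩, ⟨⟨1, h 1⟩⟩⟩

section lem
variable {n : ℕ} {s : Fin (n+1)} {i j : Fin n} {k : ℕ}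
lemma sa_lt : s.succAbove i < s ↔ (i : ℕ) < s := by
  rw [Fin.succAbove_lt_iff_castSucc_lt]; rfl
lemma lt_sa : s < s.succAbove i ↔ (s : ℕ) ≤ i := by
  rw [Fin.lt_succAbove_iff_le_castSucc]; rfl
lemma sa_val : ((s.succAbove i : Fin (n+1)) : ℕ) = if (i:ℕ) < s then (i:ℕ) else i + 1 := by
  unfold Fin.succAbove
  simp only [Fin.lt_def, Fin.val_castSucc]
  split_ifs <;> simp
lemma sa_lt_nat (h : k ≤ s) : ((s.succAbove i : Fin (n+1)) : ℕ) < k ↔ (i:ℕ) < k := by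
  rw [sa_val]; split_ifs <;> omega
lemma nat_le_sa (h : k ≤ s) : k ≤ ((s.succAbove i : Fin (n+1)) : ℕ) ↔ k ≤ (i:ℕ) := by
  rw [sa_val]; split_ifs <;> omega
lemma sa_lt_nat' (h : (s:ℕ) ≤ k) : ((s.succAbove i : Fin (n+1)) : ℕ) < k+1 ↔ (i:ℕ) < k := by
  rw [sa_val]; split_ifs <;> omega
lemma nat_le_sa' (h : (s:ℕ) ≤ k) : k+1 ≤ ((s.succAbove i : Fin (n+1)) : ℕ) ↔ k ≤ (i:ℕ) := by
  rw [sa_val]; split_ifs <;> omega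
end lem

/-- one-line values as natural numbers -/
def vl {n : ℕ} (σ : Perm (Fin n)) (i : Fin n) : ℕ := (σ i : ℕ)

lemma vl_lt {n : ℕ} (σ : Perm (Fin n)) (i : Fin n) : vl σ i < n := (σ i).2
lemma vl_not_lt {n : ℕ} (σ : Perm (Fin n)) (i : Fin n) : ¬ n < vl σ i := by
  have := vl_lt σ i; omega
lemma vl_inj {n : ℕ} (σ : Perm (Fin n)) {i j : Fin n} (h : vl σ i = vl σ j) : i = j :=
  σ.injective (Fin.ext h)
lemma vl_ins {n : ℕ} (p : Fin (n+1)) (σ : Perm (Fin n)) : vl (ins p σ) p = n := by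
  simp [vl]
lemma vl_ins' {n : ℕ} (p : Fin (n+1)) (σ : Perm (Fin n)) (i : Fin n) :
    vl (ins p σ) (p.succAbove i) = vl σ i := by
  simp [vl]

def avT {n : ℕ} (σ : Perm (Fin n)) : Prop :=
  (∀ i j k l : Fin n, i < j → j < k → k < l → vl σ i < vl σ k → vl σ k < vl σ l → ¬ vl σ l < vl σ j) ∧
  (∀ i j k l : Fin n, i < j → j < k → k < l → vl σ l < vl σ i → vl σ i < vl σ j → ¬ vl σ j < vl σ k) ∧
  (∀ i j k l : Fin n, i < j → j < k → k < l → vl σ j < vl σ k → vl σ k < vl σ i → ¬ vl σ i < vl σ l)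

def av2 {n : ℕ} (m : ℕ) (σ : Perm (Fin n)) : Prop :=
  (∀ i j k : Fin n, i < j → j < k → (k:ℕ) < m → vl σ j < vl σ k → ¬ vl σ k < vl σ i) ∧
  (∀ i j k l : Fin n, i < j → j < k → k < l → (l:ℕ) < m → vl σ l < vl σ i → vl σ i < vl σ j → ¬ vl σ j < vl σ k)

def dec {n : ℕ} (m : ℕ) (σ : Perm (Fin n)) : Prop := ∀ i j : Fin n, i < j → (j:ℕ) < m → vl σ j < vl σ i
def decR {n : ℕ} (m : ℕ) (σ : Perm (Fin n)) : Prop := ∀ i j : Fin n, i < j → m ≤ (i:ℕ) → vl σ j < vl σ i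

def Wp {n : ℕ} (m : ℕ) (σ : Perm (Fin n)) : Prop :=
  avT σ ∧ dec m σ ∧ ∀ i j k : Fin n, (i:ℕ) < m → m ≤ (j:ℕ) → j < k → vl σ i < vl σ j → ¬ vl σ j < vl σ k

def Pp {n : ℕ} (m : ℕ) (σ : Perm (Fin n)) : Prop :=
  av2 m σ ∧ decR m σ ∧ ∀ i j : Fin n, (i:ℕ) < m → m ≤ (j:ℕ) → vl σ i < vl σ j

def Ap {n : ℕ} (m : ℕ) (σ : Perm (Fin n)) : Prop :=
  av2 m σ ∧ decR m σ ∧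
  (∀ i j k : Fin n, i < j → (j:ℕ) < m → m ≤ (k:ℕ) → vl σ j < vl σ k → ¬ vl σ k < vl σ i) ∧
  (∀ i j k : Fin n, i < j → (j:ℕ) < m → m ≤ (k:ℕ) → vl σ i < vl σ j → ¬ vl σ k < vl σ i)

def Qp {n : ℕ} (m : ℕ) (σ : Perm (Fin n)) : Prop :=
  Ap m σ ∧ ∃ i j : Fin n, (i:ℕ) < m ∧ m ≤ (j:ℕ) ∧ vl σ j < vl σ i

def Bp {n : ℕ} (m : ℕ) (σ : Perm (Fin n)) : Prop :=
  (av2 m σ ∧ decR m σ ∧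
  (∀ i j k : Fin n, i < j → (j:ℕ) < m → m ≤ (k:ℕ) → vl σ i < vl σ j → ¬ vl σ k < vl σ i) ∧
  (∀ i j k l : Fin n, i < j → j < k → (k:ℕ) < m → m ≤ (l:ℕ) → vl σ i < vl σ k → vl σ k < vl σ l → ¬ vl σ l < vl σ j)) ∧
  ¬ dec m σ

def Xp {n : ℕ} (s m : ℕ) (σ : Perm (Fin n)) : Prop :=
  av2 s σ ∧ decR m σ ∧
  (∀ i j : Fin n, i < j → s ≤ (i:ℕ) → (j:ℕ) < m → vl σ j < vl σ i) ∧
  (∀ i j k : Fin n, i < j → (j:ℕ) < s → s ≤ (k:ℕ) → (k:ℕ) < m → vl σ j < vl σ k → ¬ vl σ k < vl σ i) ∧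
  (∀ i j k : Fin n, i < j → (j:ℕ) < s → s ≤ (k:ℕ) → (k:ℕ) < m → vl σ i < vl σ j → ¬ vl σ k < vl σ i) ∧
  (∀ i k : Fin n, (i:ℕ) < s → m ≤ (k:ℕ) → vl σ i < vl σ k) ∧
  (∀ i j k : Fin n, (i:ℕ) < s → s ≤ (j:ℕ) → (j:ℕ) < m → m ≤ (k:ℕ) → vl σ i < vl σ j → ¬ vl σ j < vl σ k)

section perm
variable {n : ℕ}

lemma avT_ins (p : Fin (n+1)) (σ : Perm (Fin n)) : avT (ins p σ) ↔ avT σ ∧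
    (∀ i j k : Fin n, (i:ℕ) < p → (p:ℕ) ≤ j → j < k → vl σ i < vl σ j → ¬ vl σ j < vl σ k) ∧
    (∀ i j k : Fin n, i < j → (j:ℕ) < p → (p:ℕ) ≤ k → vl σ k < vl σ i → ¬ vl σ i < vl σ j) ∧
    (∀ i j k : Fin n, i < j → j < k → (k:ℕ) < p → vl σ j < vl σ k → ¬ vl σ k < vl σ i) := by
  simp only [avT, Fin.forall_iff_succAbove p, vl_ins, vl_ins', sa_lt, lt_sa,
    Fin.succAbove_lt_succAbove_iff, lt_irrefl, vl_lt, vl_not_lt,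
    not_true_eq_false, not_false_eq_true, false_implies, true_implies, implies_true,
    true_and, and_true, forall_and]
  constructor
  · rintro ⟨h1,h2,h3⟩
    grind
  · rintro ⟨h1,h2,h3⟩
    grind

lemma tri (σ : Perm (Fin n)) {i j : Fin n} (h : i < j) : vl σ i < vl σ j ∨ vl σ j < vl σ i := by
  rcases lt_trichotomy (vl σ i) (vl σ j) with h1 | h1 | h1
  · exact Or.inl h1
  · exact absurd (vl_inj σ h1) h.ne
  · exact Or.inr h1

lemma tri' (σ : Perm (Fin n)) {i j : Fin n} (h : i < j) (h' : ¬ vl σ i < vl σ j) :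
    vl σ j < vl σ i := (tri σ h).resolve_left h'

lemma Wp_iff (p : Fin (n+1)) (σ : Perm (Fin n)) : Wp p σ ↔ avT (ins p σ) ∧ dec p σ := by
  rw [avT_ins]
  unfold Wp dec
  constructor
  · rintro ⟨h1, h2, h3⟩
    refine ⟨⟨h1, h3, ?_, ?_⟩, h2⟩
    · intro i j k hij hj _ _ h
      have := h2 i j hij hj; omega
    · intro i j k hij hjk hk h
      have := h2 j k hjk hk; omega
  · rintro ⟨⟨h1, h3, _, _⟩, h2⟩
    exact ⟨h1, h2, h3⟩

lemma Wp_zero (σ : Perm (Fin n)) : Wp 0 σ ↔ avT σ := by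
  unfold Wp dec; simp

lemma dec_ins_lt {k : ℕ} (p : Fin (n+1)) (σ : Perm (Fin n)) (h : k ≤ p) :
    dec k (ins p σ) ↔ dec k σ := by
  simp only [dec, Fin.forall_iff_succAbove p, vl_ins, vl_ins', sa_lt, lt_sa,
    Fin.succAbove_lt_succAbove_iff, lt_irrefl, vl_lt, vl_not_lt, sa_lt_nat h, nat_le_sa h,
    not_true_eq_false, not_false_eq_true, false_implies, true_implies, implies_true,
    true_and, and_true, forall_and]
  grind

lemma dec_ins_zero {k : ℕ} (σ : Perm (Fin n)) :
    dec (k+1) (ins 0 σ) ↔ dec k σ := by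
  have h : ((0 : Fin (n+1)) : ℕ) ≤ k := by simp
  simp only [dec, Fin.forall_iff_succAbove 0, vl_ins, vl_ins', sa_lt, lt_sa,
    Fin.succAbove_lt_succAbove_iff, lt_irrefl, vl_lt, vl_not_lt, sa_lt_nat' h, nat_le_sa' h,
    not_true_eq_false, not_false_eq_true, false_implies, true_implies, implies_true,
    true_and, and_true, forall_and]
  grind

lemma dec_ins_mid {k : ℕ} (p : Fin (n+1)) (σ : Perm (Fin n)) (h0 : 0 < (p:ℕ)) (h : (p:ℕ) < k) :
    ¬ dec k (ins p σ) := by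
  intro hd
  have hn : 0 < n := by have := p.2; omega
  have := hd (p.succAbove ⟨0, hn⟩) p (by rw [sa_lt]; exact h0) h
  rw [vl_ins, vl_ins'] at this
  exact vl_not_lt _ _ this

lemma Wp_ins_zero {k : ℕ} (σ : Perm (Fin n)) : Wp (k+1) (ins 0 σ) ↔ Wp k σ := by
  have h : ((0 : Fin (n+1)) : ℕ) ≤ k := by simp
  rw [Wp, avT_ins, dec_ins_zero, Wp]
  simp only [Fin.forall_iff_succAbove (0 : Fin (n+1)), vl_ins, vl_ins', sa_lt, lt_sa,
    Fin.succAbove_lt_succAbove_iff, lt_irrefl, vl_lt, vl_not_lt, sa_lt_nat' h, nat_le_sa' h,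
    not_true_eq_false, not_false_eq_true, false_implies, true_implies, implies_true,
    true_and, and_true, forall_and]
  simp

lemma Wp_ins_ge {k : ℕ} (p : Fin (n+1)) (σ : Perm (Fin n)) (h : k + 1 ≤ p) :
    Wp (k+1) (ins p σ) ↔ Wp p σ := by
  rw [Wp_iff p σ, Wp, dec_ins_lt p σ h]
  simp only [Fin.forall_iff_succAbove p, vl_ins, vl_ins', sa_lt, lt_sa,
    Fin.succAbove_lt_succAbove_iff, lt_irrefl, vl_lt, vl_not_lt, sa_lt_nat h, nat_le_sa h,
    not_true_eq_false, not_false_eq_true, false_implies, true_implies, implies_true,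
    true_and, and_true, forall_and]
  constructor
  · rintro ⟨h1, h2, h3, h4⟩
    refine ⟨h1, ?_⟩
    rw [avT_ins] at h1
    obtain ⟨-, -, -, h5⟩ := h1
    have key : ∀ i j : Fin n, (i:ℕ) < k+1 → k+1 ≤ (j:ℕ) → (j:ℕ) < p → vl σ j < vl σ i := by
      intro i j hi hj hjp
      apply tri' σ (show i < j from Fin.lt_def.2 (by omega))
      intro hlt
      grind
    intro i j hij hj
    by_cases hjk : (j:ℕ) < k+1
    · exact h2 i j hij hjk
    by_cases hik : (i:ℕ) < k+1
    · exact key i j hik (by omega) hj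
    · have hkn : k < n := by have := i.2; omega
      apply tri' σ hij
      intro hlt
      have := key ⟨k, hkn⟩ j (by simp) (by omega) hj
      exact h5 ⟨k, hkn⟩ i j (Fin.lt_def.2 (by simp; omega)) hij hj hlt this
  · rintro ⟨h1, h2⟩
    refine ⟨h1, fun i j hij hj => h2 i j hij (by omega), ?_⟩
    rw [avT_ins] at h1
    obtain ⟨h0, h5, -, -⟩ := h1
    unfold dec at h2
    refine ⟨?_, ?_⟩
    · intro i j hi hj hjp hlt
      have := h2 i j (Fin.lt_def.2 (by omega)) hjp
      omega
    · intro i j l hi hj hjl hlt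
      by_cases hjp : (j:ℕ) < p
      · have := h2 i j (Fin.lt_def.2 (by omega)) hjp
        omega
      · exact h5 i j l (by omega) (by omega) hjl hlt

lemma tri_false (σ : Perm (Fin n)) {i j : Fin n} (h : i ≠ j) (h' : ¬ vl σ i < vl σ j) :
    vl σ j < vl σ i := by
  rcases lt_or_gt_of_ne h with h1 | h1
  · exact tri' σ h1 h'
  · exact (tri σ h1).resolve_right h'

/-- counting functions -/
noncomputable def cW (n k : ℕ) : ℕ := cnt n (Wp k)
noncomputable def cF (n : ℕ) : ℕ := cnt n avT
noncomputable def cB (n p : ℕ) : ℕ := cnt n (Bp p)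
noncomputable def cE (n : ℕ) : ℕ := cnt n (av2 n)
noncomputable def cP (n p : ℕ) : ℕ := cnt n (Pp p)
noncomputable def cQ (n p : ℕ) : ℕ := cnt n (Qp p)
noncomputable def cA (n p : ℕ) : ℕ := cnt n (Ap p)
noncomputable def cX (n s m : ℕ) : ℕ := cnt n (Xp s m)

lemma cW_zero (n : ℕ) : cW n 0 = cF n := cnt_congr Wp_zero

lemma cW_succ (n k : ℕ) (hk : k ≤ n) :
    cW (n+1) (k+1) = ∑ p ∈ Finset.Icc k n, cW n p := by
  unfold cW
  rw [cnt_succ' (Wp (k+1)) (fun p => if p = 0 then cW n k else if p ≤ k then 0 else cW n p)]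
  · rw [Finset.sum_range_succ', Finset.range_eq_Ico]
    rw [← Finset.add_sum_Ioc_eq_sum_Icc hk]
    simp only [if_true, Nat.succ_ne_zero, if_false, cW]
    rw [add_comm]
    congr 1
    have : Finset.Ioc k n = (Finset.Icc 1 n).filter (fun p => ¬ p ≤ k) := by
      ext x; simp; omega
    rw [this, Finset.sum_filter]
    rw [Finset.sum_Ico_add' (fun p => if p ≤ k then 0 else cnt n (Wp p)) 0 n 1]
    have h2 : Finset.Ico (0+1) (n+1) = Finset.Icc 1 n := by ext x; simp
    rw [h2]
    refine Finset.sum_congr rfl fun x _ => ?_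
    by_cases h : x ≤ k <;> simp [h]
  · intro p
    by_cases h0 : p = 0
    · subst h0
      simp only [Fin.val_zero, if_true, cW]
      exact cnt_congr Wp_ins_zero
    · have h0' : (p:ℕ) ≠ 0 := fun h => h0 (Fin.ext h)
      simp only [h0', if_false]
      by_cases hp : (p:ℕ) ≤ k
      · simp only [hp, if_true]
        apply cnt_false
        intro σ h
        exact dec_ins_mid p σ (by omega) (by omega) h.2.1
      · simp only [hp, if_false]
        exact cnt_congr fun σ => Wp_ins_ge p σ (by omega)

lemma Bp_iff (p : Fin (n+1)) (σ : Perm (Fin n)) : Bp p σ ↔ avT (ins p σ) ∧ ¬ dec p σ := by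
  rw [avT_ins]
  unfold Bp
  refine and_congr_left fun hd => ?_
  have hd' : ∃ a b : Fin n, a < b ∧ (b:ℕ) < p ∧ vl σ a < vl σ b := by
    unfold dec at hd
    push Not at hd
    obtain ⟨a, b, h1, h2, h3⟩ := hd
    exact ⟨a, b, h1, h2, tri_false σ h1.ne' (by omega)⟩
  obtain ⟨a, b, hab, hb, hv⟩ := hd'
  unfold av2 decR avT
  constructor
  · rintro ⟨⟨h1, h2⟩, h3, h4, h5⟩
    refine ⟨⟨?_, ?_, ?_⟩, ?_, ?_, h1⟩
    · intro i j k l hij hjk hkl a1 a2 a3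
      by_cases hl : (l:ℕ) < p
      · exact h1 j k l hjk hkl hl a2 a3
      by_cases hk : (k:ℕ) < p
      · exact h5 i j k l hij hjk hk (by omega) a1 a2 a3
      · have := h3 k l hkl (by omega)
        omega
    · intro i j k l hij hjk hkl a1 a2 a3
      by_cases hl : (l:ℕ) < p
      · exact h2 i j k l hij hjk hkl hl a1 a2 a3
      by_cases hj : (j:ℕ) < p
      · exact h4 i j l hij hj (by omega) a2 a1
      · have := h3 j k hjk (by omega)
        omega
    · intro i j k l hij hjk hkl a1 a2 a3
      by_cases hk : (k:ℕ) < p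
      · exact h1 i j k hij hjk hk a1 a2
      · have := h3 k l hkl (by omega)
        omega
    · intro i j k hi hj hjk a1 a2
      have := h3 j k hjk hj
      omega
    · intro i j k hij hj hk a1 a2
      exact h4 i j k hij hj hk a2 a1
  · rintro ⟨⟨h1, h2, h3⟩, h4, h5, h6⟩
    refine ⟨⟨h6, ?_⟩, ?_, ?_, ?_⟩
    · intro i j k l hij hjk hkl _
      exact h2 i j k l hij hjk hkl
    · intro i j hij hi
      apply tri' σ hij
      refine h4 a i j (lt_trans (Fin.lt_def.1 hab) hb) hi hij ?_
      apply tri_false σ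
      · rintro rfl; have := Fin.lt_def.1 hab; omega
      · intro h
        exact h5 a b i hab hb hi h hv
    · intro i j k hij hj hk a1 a2
      exact h5 i j k hij hj hk a2 a1
    · intro i j k l hij hjk hk hl
      exact h1 i j k l hij hjk (Fin.lt_def.2 (by omega))

lemma cF_succ (n : ℕ) : cF (n+1) = ∑ p ∈ Finset.range (n+1), (cW n p + cB n p) := by
  unfold cF
  apply cnt_succ' avT (fun p => cW n p + cB n p)
  intro p
  rw [cnt_split _ (dec p)]
  unfold cW cB
  congr 1
  · exact cnt_congr fun σ => (Wp_iff p σ).symm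
  · exact cnt_congr fun σ => (Bp_iff p σ).symm

lemma av2_ins_le {k : ℕ} (s : Fin (n+1)) (σ : Perm (Fin n)) (h : k ≤ s) :
    av2 k (ins s σ) ↔ av2 k σ := by
  simp only [av2, Fin.forall_iff_succAbove s, vl_ins, vl_ins', sa_lt, lt_sa,
    Fin.succAbove_lt_succAbove_iff, lt_irrefl, vl_lt, vl_not_lt, sa_lt_nat h, nat_le_sa h,
    not_true_eq_false, not_false_eq_true, false_implies, true_implies, implies_true,
    true_and, and_true, forall_and]
  grind

lemma av2_ins_gt {k : ℕ} (s : Fin (n+1)) (σ : Perm (Fin n)) (h : (s:ℕ) ≤ k) :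
    av2 (k+1) (ins s σ) ↔ av2 k σ ∧
      (∀ i j : Fin n, i < j → (s:ℕ) ≤ i → (j:ℕ) < k → vl σ j < vl σ i) ∧
      (∀ i j l : Fin n, i < j → (j:ℕ) < s → (s:ℕ) ≤ l → (l:ℕ) < k →
        vl σ i < vl σ j → ¬ vl σ l < vl σ i) := by
  have h' : (s:ℕ) < k+1 := by omega
  have e : (∀ i j : Fin n, i < j → (s:ℕ) ≤ i → (j:ℕ) < k → vl σ j < vl σ i) ↔
      (∀ i j : Fin n, i < j → (s:ℕ) ≤ i → (j:ℕ) < k → ¬ vl σ i < vl σ j) := by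
    refine forall_congr' fun i => forall_congr' fun j => ?_
    constructor
    · intro h a b c; have := h a b c; omega
    · intro h a b c; exact tri' σ a (h a b c)
  rw [e]
  simp only [av2, Fin.forall_iff_succAbove s, vl_ins, vl_ins', sa_lt, lt_sa,
    Fin.succAbove_lt_succAbove_iff, lt_irrefl, vl_lt, vl_not_lt, sa_lt_nat' h, nat_le_sa' h, h',
    not_true_eq_false, not_false_eq_true, false_implies, true_implies, implies_true,
    true_and, and_true, forall_and]
  constructor
  · rintro ⟨h1, h2⟩
    grind
  · rintro ⟨h1, h2⟩
    grind

lemma decR_ins_eq {k : ℕ} (s : Fin (n+1)) (σ : Perm (Fin n)) (h : k = s) :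
    decR k (ins s σ) ↔ decR k σ := by
  subst h
  simp only [decR, Fin.forall_iff_succAbove s, vl_ins, vl_ins', sa_lt, lt_sa,
    Fin.succAbove_lt_succAbove_iff, lt_irrefl, vl_lt, vl_not_lt, sa_lt_nat le_rfl, nat_le_sa le_rfl,
    not_true_eq_false, not_false_eq_true, false_implies, true_implies, implies_true,
    true_and, and_true, forall_and]
  grind

lemma decR_ins_lt {k : ℕ} (s : Fin (n+1)) (σ : Perm (Fin n)) (h : k < s) :
    ¬ decR k (ins s σ) := by
  intro hd
  have hn : k < n := by have := s.2; omega
  have := hd (s.succAbove ⟨k, hn⟩) s (by rw [sa_lt]; exact h) (by rw [nat_le_sa h.le])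
  rw [vl_ins, vl_ins'] at this
  exact vl_not_lt _ _ this

lemma decR_ins_gt {k : ℕ} (s : Fin (n+1)) (σ : Perm (Fin n)) (h : (s:ℕ) ≤ k) :
    decR (k+1) (ins s σ) ↔ decR k σ := by
  have h' : ¬ k + 1 ≤ (s:ℕ) := by omega
  simp only [decR, Fin.forall_iff_succAbove s, vl_ins, vl_ins', sa_lt, lt_sa,
    Fin.succAbove_lt_succAbove_iff, lt_irrefl, vl_lt, vl_not_lt, sa_lt_nat' h, nat_le_sa' h, h',
    not_true_eq_false, not_false_eq_true, false_implies, true_implies, implies_true,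
    true_and, and_true, forall_and]
  grind

lemma av2_mono {k l : ℕ} (σ : Perm (Fin n)) (h : k ≤ l) (hl : av2 l σ) : av2 k σ :=
  ⟨fun a b c d e f => hl.1 a b c d e (by omega), fun a b c d e f g i => hl.2 a b c d e f g (by omega)⟩

lemma Ap_iff (q : Fin (n+1)) (σ : Perm (Fin n)) : av2 (n+1) (ins q σ) ↔ Ap q σ := by
  rw [av2_ins_gt q σ (Nat.lt_succ_iff.1 q.2)]
  unfold Ap
  constructor
  · rintro ⟨h1, h2, h3⟩
    refine ⟨av2_mono σ (Nat.lt_succ_iff.1 q.2) h1, fun i j hij hi => h2 i j hij hi j.2, ?_,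
      fun i j l a b c => h3 i j l a b c l.2⟩
    intro i j k hij hj hk
    exact h1.1 i j k hij (Fin.lt_def.2 (by omega)) k.2
  · rintro ⟨h1, h2, h3, h4⟩
    refine ⟨⟨?_, ?_⟩, fun i j hij hi _ => h2 i j hij hi, fun i j l a b c _ => h4 i j l a b c⟩
    · intro i j k hij hjk _ a1 a2
      by_cases hk : (k:ℕ) < q
      · exact h1.1 i j k hij hjk hk a1 a2
      by_cases hj : (j:ℕ) < q
      · exact h3 i j k hij hj (by omega) a1 a2
      · have := h2 j k hjk (by omega)
        omega
    · intro i j k l hij hjk hkl _ a1 a2 a3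
      by_cases hl : (l:ℕ) < q
      · exact h1.2 i j k l hij hjk hkl hl a1 a2 a3
      by_cases hj : (j:ℕ) < q
      · exact h4 i j l hij hj (by omega) a2 a1
      · have := h2 j k hjk (by omega)
        omega

lemma Pp_ins_eq {q : ℕ} (s : Fin (n+1)) (σ : Perm (Fin n)) (h : q = s) :
    Pp q (ins s σ) ↔ Pp q σ := by
  rw [Pp, Pp, av2_ins_le s σ h.le, decR_ins_eq s σ h]
  subst h
  simp only [Fin.forall_iff_succAbove s, vl_ins, vl_ins', sa_lt, lt_sa,
    Fin.succAbove_lt_succAbove_iff, lt_irrefl, vl_lt, vl_not_lt, sa_lt_nat le_rfl, nat_le_sa le_rfl,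
    not_true_eq_false, not_false_eq_true, false_implies, true_implies, implies_true,
    true_and, and_true, forall_and]

lemma Pp_ins_ne {q : ℕ} (s : Fin (n+1)) (σ : Perm (Fin n)) (hq : q ≤ n) (h : q ≠ s) :
    ¬ Pp q (ins s σ) := by
  rintro ⟨h1, h2, h3⟩
  rcases lt_or_gt_of_ne h with h | h
  · exact decR_ins_lt s σ h h2
  · have hn : n - 1 < n := by omega
    have := h3 s (s.succAbove ⟨n-1, hn⟩) h (by rw [sa_val]; simp; split_ifs <;> omega)
    rw [vl_ins, vl_ins'] at this
    exact vl_not_lt _ _ this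

lemma Pp_full (σ : Perm (Fin n)) : Pp n σ ↔ av2 n σ := by
  constructor
  · exact fun h => h.1
  · intro h
    exact ⟨h, fun i j _ hi => absurd i.2 (by omega), fun i j _ hi => absurd j.2 (by omega)⟩

lemma sum_single (n q : ℕ) (hq : q ≤ n) (c : ℕ) :
    ∑ p ∈ Finset.range (n+1), (if p = q then c else 0) = c := by
  rw [Finset.sum_ite_eq']
  simp; omega

lemma cP_eq (q d : ℕ) : cP (q + d) q = cE q := by
  induction d with
  | zero => exact cnt_congr Pp_full
  | succ d ih =>
    rw [← ih, ← add_assoc]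
    unfold cP
    rw [cnt_succ' (Pp q) (fun p => if p = q then cnt (q+d) (Pp q) else 0)]
    · exact sum_single _ _ (by omega) _
    · intro p
      by_cases h : (p:ℕ) = q
      · simp only [h, if_true]
        exact cnt_congr fun σ => Pp_ins_eq p σ h.symm
      · simp only [h, if_false]
        exact cnt_false fun σ => Pp_ins_ne p σ (by omega) (Ne.symm h)

lemma cE_zero : cE 0 = 1 := cnt_zero fun σ => ⟨fun i => i.elim0, fun i => i.elim0⟩

lemma cA_eq (n p : ℕ) : cA n p = cP n p + cQ n p := by
  unfold cA cP cQ
  rw [cnt_split (Ap p) (Qp p), add_comm]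
  congr 1
  · refine cnt_congr fun σ => ?_
    unfold Qp Pp
    constructor
    · rintro ⟨h1, h2⟩
      refine ⟨h1.1, h1.2.1, fun i j hi hj => ?_⟩
      apply tri_false σ
      · rintro rfl; omega
      · intro h; exact h2 ⟨h1, i, j, hi, hj, h⟩
    · rintro ⟨h1, h2, h3⟩
      refine ⟨⟨h1, h2, ?_, ?_⟩, ?_⟩
      · intro i j k hij hj hk _ h
        have := h3 i k (lt_trans (Fin.lt_def.1 hij) hj) hk
        omega
      · intro i j k hij hj hk _ h
        have := h3 i k (lt_trans (Fin.lt_def.1 hij) hj) hk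
        omega
      · rintro ⟨_, i, j, hi, hj, h⟩
        have := h3 i j hi hj
        omega
  · refine cnt_congr fun σ => ?_
    unfold Qp
    tauto

lemma cE_succ (n : ℕ) : cE (n+1) = ∑ p ∈ Finset.range (n+1), cA n p := by
  unfold cE
  exact cnt_succ' (av2 (n+1)) (fun p => cA n p) fun p => cnt_congr fun σ => Ap_iff p σ

lemma Ap_ins_eq {q : ℕ} (s : Fin (n+1)) (σ : Perm (Fin n)) (h : q = s) :
    Ap q (ins s σ) ↔ Ap q σ := by
  rw [Ap, Ap, av2_ins_le s σ h.le, decR_ins_eq s σ h]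
  subst h
  simp only [Fin.forall_iff_succAbove s, vl_ins, vl_ins', sa_lt, lt_sa,
    Fin.succAbove_lt_succAbove_iff, lt_irrefl, vl_lt, vl_not_lt, sa_lt_nat le_rfl, nat_le_sa le_rfl,
    not_true_eq_false, not_false_eq_true, false_implies, true_implies, implies_true,
    true_and, and_true, forall_and]
  grind

lemma Qp_ins_eq {q : ℕ} (s : Fin (n+1)) (σ : Perm (Fin n)) (h : q = s) :
    Qp q (ins s σ) ↔ Qp q σ := by
  rw [Qp, Qp, Ap_ins_eq s σ h]
  refine and_congr_right fun _ => ?_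
  subst h
  simp only [Fin.exists_iff_succAbove s, vl_ins, vl_ins', sa_lt, lt_sa,
    Fin.succAbove_lt_succAbove_iff, lt_irrefl, vl_lt, vl_not_lt, sa_lt_nat le_rfl, nat_le_sa le_rfl,
    false_and, and_false, exists_false, false_or]

lemma Qp_ins_lt {q : ℕ} (s : Fin (n+1)) (σ : Perm (Fin n)) (hq : q < n) (h : (s:ℕ) ≤ q) :
    Qp (q+1) (ins s σ) ↔ Pp s σ := by
  have h' : (s:ℕ) < q+1 := by omega
  have h'' : ¬ q + 1 ≤ (s:ℕ) := by omega
  rw [Qp, Ap, Pp, av2_ins_gt s σ h, decR_ins_gt s σ h]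
  simp only [Fin.forall_iff_succAbove s, Fin.exists_iff_succAbove s, vl_ins, vl_ins', sa_lt, lt_sa,
    Fin.succAbove_lt_succAbove_iff, lt_irrefl, vl_lt, vl_not_lt, sa_lt_nat' h, nat_le_sa' h, h', h'',
    not_true_eq_false, not_false_eq_true, false_implies, true_implies, implies_true,
    true_and, and_true, forall_and, false_and, and_false, exists_false, false_or]
  have hz : n - 1 < n := by omega
  constructor
  · rintro ⟨⟨⟨a1, a2, a3⟩, a4, ⟨a5, a6⟩, a7, a8⟩, -⟩
    have b1 : ∀ i k : Fin n, (s:ℕ) ≤ i → (i:ℕ) < q → q ≤ (k:ℕ) → vl σ k < vl σ i := by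
      intro i k h1 h2 h3
      exact tri' σ (Fin.lt_def.2 (by omega)) (fun h => a5 i k h1 h2 h3 h)
    have b2 : ∀ i k : Fin n, (i:ℕ) < s → q ≤ (k:ℕ) → vl σ i < vl σ k := by
      intro i k h1 h2
      exact (tri σ (Fin.lt_def.2 (by omega))).resolve_right (a7 i k h1 h2)
    refine ⟨av2_mono σ h a1, ?_, ?_⟩
    · intro i j hij hi
      by_cases hj : (j:ℕ) < q
      · exact a2 i j hij hi hj
      · by_cases hi' : (i:ℕ) < q
        · exact b1 i j hi hi' (by omega)
        · exact a4 i j hij (by omega)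
    · intro i j hi hj
      by_cases hj' : (j:ℕ) < q
      · exact lt_trans (b2 i ⟨n-1, hz⟩ hi (by simp; omega)) (b1 j ⟨n-1, hz⟩ hj hj' (by simp; omega))
      · exact b2 i j hi (by omega)
  · rintro ⟨h1, h2, h3⟩
    refine ⟨⟨⟨⟨?_, ?_⟩, ?_, ?_⟩, ?_, ⟨?_, ?_⟩, ?_, ?_⟩, Or.inl ⟨⟨n-1, hz⟩, by simp; omega⟩⟩
    · intro i j k hij hjk hk
      by_cases hk' : (k:ℕ) < s
      · exact h1.1 i j k hij hjk hk'
      · have := h2 j k hjk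
        have := h3 i k
        have := h2 i j hij
        have := Fin.lt_def.1 hij
        omega
    · intro i j k l hij hjk hkl hl
      by_cases hk' : (l:ℕ) < s
      · exact h1.2 i j k l hij hjk hkl hk'
      · have := h2 i j hij
        have := h3 i l
        omega
    · intro i j hij hi hj
      exact h2 i j hij hi
    · intro i j l hij hj hl _ _
      have := h3 i l
      have := Fin.lt_def.1 hij
      omega
    · intro i j hij hi
      exact h2 i j hij (by omega)
    · intro i k hi hi' hk hv
      have := h2 i k (Fin.lt_def.2 (by omega)) hi
      omega
    · intro i j k hij hj hk
      have := h2 j k (Fin.lt_def.2 (by omega))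
      have := h3 i k
      have := Fin.lt_def.1 hij
      omega
    · intro i k hi hk
      have := h3 i k hi (by omega)
      omega
    · intro i j k hij hj hk
      have := h2 i j hij
      have := h3 i k
      omega

lemma cQ_self (n : ℕ) : cQ n n = 0 := by
  apply cnt_false
  rintro σ ⟨_, i, j, _, hj, _⟩
  have := j.2
  omega

lemma cQ_succ (n q : ℕ) (hq : q ≤ n) : cQ (n+1) q = cQ n q + ∑ s ∈ Finset.range q, cP n s := by
  unfold cQ
  rw [cnt_succ' (Qp q) (fun p => (if p = q then cQ n q else 0) + (if p < q then cP n p else 0))]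
  · rw [Finset.sum_add_distrib, sum_single _ _ hq, ← Finset.sum_filter]
    congr 1
    apply Finset.sum_congr _ fun _ _ => rfl
    ext x; simp; omega
  · intro p
    rcases lt_trichotomy (p:ℕ) q with h | h | h
    · simp only [h.ne, h, if_false, if_true, zero_add]
      obtain ⟨q, rfl⟩ : ∃ q', q = q' + 1 := ⟨q - 1, by omega⟩
      exact cnt_congr fun σ => Qp_ins_lt p σ (by omega) (by omega)
    · simp only [h, lt_irrefl, if_true, if_false, add_zero]
      exact cnt_congr fun σ => Qp_ins_eq p σ h.symm
    · simp only [h.ne', h.not_gt, if_false, add_zero]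
      exact cnt_false fun σ hs => decR_ins_lt p σ h hs.1.2.1


lemma Xp_full (s : ℕ) (hs : s ≤ n) (σ : Perm (Fin n)) : Xp s n σ ↔ Ap s σ := by
  unfold Xp Ap decR
  constructor
  · rintro ⟨h1, h2, h3, h4, h5, h6, h7⟩
    exact ⟨h1, fun i j hij hi => h3 i j hij hi j.2, fun i j k a b c => h4 i j k a b c k.2,
      fun i j k a b c => h5 i j k a b c k.2⟩
  · rintro ⟨h1, h2, h3, h4⟩
    exact ⟨h1, fun i j _ hi => absurd i.2 (by omega), fun i j hij hi _ => h2 i j hij hi,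
      fun i j k a b c _ => h3 i j k a b c, fun i j k a b c _ => h4 i j k a b c,
      fun i k _ hk => absurd k.2 (by omega), fun i j k _ _ _ hk => absurd k.2 (by omega)⟩

lemma Xp_diag (s : ℕ) (σ : Perm (Fin n)) : Xp s s σ ↔ Pp s σ := by
  unfold Xp Pp
  constructor
  · rintro ⟨h1, h2, h3, h4, h5, h6, h7⟩
    exact ⟨h1, h2, h6⟩
  · rintro ⟨h1, h2, h3⟩
    exact ⟨h1, h2, fun i j hij hi hj => absurd (Fin.lt_def.1 hij) (by omega),
      fun i j k a b c d => by omega, fun i j k a b c d => by omega, h3,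
      fun i j k a b c d => by omega⟩

lemma Xp_ins_self {m : ℕ} (s : Fin (n+1)) (σ : Perm (Fin n)) (h : (s:ℕ) ≤ m) :
    Xp s (m+1) (ins s σ) ↔ Xp s m σ := by
  have h' : (s:ℕ) < m+1 := by omega
  have h'' : ¬ m + 1 ≤ (s:ℕ) := by omega
  rw [Xp, Xp, av2_ins_le s σ le_rfl, decR_ins_gt s σ h]
  simp only [Fin.forall_iff_succAbove s, vl_ins, vl_ins', sa_lt, lt_sa,
    Fin.succAbove_lt_succAbove_iff, lt_irrefl, vl_lt, vl_not_lt, sa_lt_nat' h, nat_le_sa' h, h', h'',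
    sa_lt_nat (le_refl (s:ℕ)), nat_le_sa (le_refl (s:ℕ)), le_refl,
    not_true_eq_false, not_false_eq_true, false_implies, true_implies, implies_true,
    true_and, and_true, forall_and]
  grind

lemma Xp_ins_m {s : ℕ} (m : Fin (n+1)) (σ : Perm (Fin n)) (h0 : 1 ≤ s) (h : s < m) :
    Xp s m (ins m σ) ↔ Pp m σ ∧ dec m σ := by
  have hs : s < n := by have := m.2; omega
  rw [Xp, Pp, av2_ins_le m σ h.le, decR_ins_eq m σ rfl]
  simp only [Fin.forall_iff_succAbove m, vl_ins, vl_ins', sa_lt, lt_sa,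
    Fin.succAbove_lt_succAbove_iff, lt_irrefl, vl_lt, vl_not_lt,
    sa_lt_nat (le_refl (m:ℕ)), nat_le_sa (le_refl (m:ℕ)), sa_lt_nat h.le, nat_le_sa h.le, le_refl,
    not_true_eq_false, not_false_eq_true, false_implies, true_implies, implies_true,
    true_and, and_true, forall_and]
  constructor
  · intro hh
    have b1 : ∀ i j : Fin n, (i:ℕ) < s → s ≤ (j:ℕ) → (j:ℕ) < m → vl σ j < vl σ i := by
      intro i j h1 h2 h3
      apply tri' σ (Fin.lt_def.2 (by omega))
      grind
    have b2 : ∀ i k : Fin n, (i:ℕ) < s → (m:ℕ) ≤ k → vl σ i < vl σ k := by grind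
    have b3 : ∀ i j : Fin n, i < j → s ≤ (i:ℕ) → (j:ℕ) < m → vl σ j < vl σ i := by grind
    have b4 : ∀ i j k : Fin n, i < j → (j:ℕ) < s → s ≤ (k:ℕ) → (k:ℕ) < m →
      vl σ i < vl σ j → ¬ vl σ k < vl σ i := by grind
    have hd : dec m σ := by
      intro i j hij hj
      by_cases hj' : (j:ℕ) < s
      · apply tri' σ hij
        intro hv
        exact b4 i j ⟨s, hs⟩ hij hj' (by simp) (by simpa using h) hv
          (b1 i ⟨s, hs⟩ (by have := Fin.lt_def.1 hij; omega) (by simp) (by simpa using h))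
      · by_cases hi : (i:ℕ) < s
        · exact b1 i j hi (by omega) hj
        · exact b3 i j hij (by omega) hj
    refine ⟨⟨⟨?_, ?_⟩, by tauto, ?_⟩, hd⟩
    · intro i j k hij hjk hk
      have := hd j k hjk hk
      omega
    · intro i j k l hij hjk hkl hl
      have := hd j k hjk (by have := Fin.lt_def.1 hkl; omega)
      omega
    · intro i j hi hj
      by_cases hi' : (i:ℕ) < s
      · exact b2 i j hi' hj
      · exact lt_trans (b1 ⟨0, by omega⟩ i (by simp; omega) (by omega) hi)
          (b2 ⟨0, by omega⟩ j (by simp; omega) hj)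
  · rintro ⟨⟨h1, h2, h3⟩, h4⟩
    have h5 := av2_mono σ h.le h1
    unfold dec at h4
    grind

lemma Xp_ins_ne {s m : ℕ} (t : Fin (n+1)) (σ : Perm (Fin n)) (h0 : 1 ≤ s) (h : s < m) (hm : m ≤ n)
    (h1 : (t:ℕ) ≠ s) (h2 : (t:ℕ) ≠ m) : ¬ Xp s m (ins t σ) := by
  rintro ⟨-, a2, a3, -, -, a6, -⟩
  rcases lt_or_gt_of_ne h2 with h2 | h2
  · rcases lt_or_gt_of_ne h1 with h1 | h1
    · have := a6 t (t.succAbove ⟨n-1, by omega⟩) h1 (by rw [sa_val]; simp; split_ifs <;> omega)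
      rw [vl_ins, vl_ins'] at this
      exact vl_not_lt _ _ this
    · have := a3 (t.succAbove ⟨s, by omega⟩) t (by rw [sa_lt]; exact h1)
        (by rw [nat_le_sa h1.le]) h2
      rw [vl_ins, vl_ins'] at this
      exact vl_not_lt _ _ this
  · exact decR_ins_lt t σ h2 a2

lemma cnt_dec (n : ℕ) : cnt n (dec n) = 1 := by
  induction n with
  | zero => exact cnt_zero fun σ i => i.elim0
  | succ n ih =>
    rw [cnt_succ' (dec (n+1)) (fun p => if p = 0 then 1 else 0)]
    · exact sum_single _ _ (by omega) _
    · intro p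
      by_cases h : p = 0
      · subst h
        simp only [Fin.val_zero, if_true]
        exact (cnt_congr fun σ => dec_ins_zero σ).trans ih
      · have h0' : (p:ℕ) ≠ 0 := fun h' => h (Fin.ext h')
        simp only [h0', if_false]
        exact cnt_false fun σ => dec_ins_mid p σ (by omega) p.2

lemma cnt_Pdec (m d : ℕ) : cnt (m+d) (fun σ => Pp m σ ∧ dec m σ) = 1 := by
  induction d with
  | zero =>
    rw [← cnt_dec m]
    refine cnt_congr fun σ => ?_
    have := Pp_full σ
    refine ⟨fun h => h.2, fun hd => ⟨(Pp_full σ).2 ⟨?_, ?_⟩, hd⟩⟩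
    · intro i j k hij hjk hk
      have := hd j k hjk hk
      omega
    · intro i j k l hij hjk hkl hl
      have := hd j k hjk (by have := Fin.lt_def.1 hkl; omega)
      omega
  | succ d ih =>
    rw [← add_assoc, cnt_succ' _ (fun p => if p = m then 1 else 0)]
    · exact sum_single _ _ (by omega) _
    · intro p
      by_cases h : (p:ℕ) = m
      · simp only [h, if_true]
        exact (cnt_congr fun σ => by rw [Pp_ins_eq p σ h.symm, dec_ins_lt p σ h.ge]).trans ih
      · simp only [h, if_false]
        exact cnt_false fun σ hs => Pp_ins_ne p σ (by omega) (Ne.symm h) hs.1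

lemma cX_succ (n s m : ℕ) (h0 : 1 ≤ s) (h : s ≤ m) (hm : m + 1 ≤ n) :
    cX (n+1) s (m+1) = cX n s m + 1 := by
  unfold cX
  rw [cnt_succ' _ (fun p => (if p = s then cnt n (Xp s m) else 0) + (if p = m+1 then 1 else 0))]
  · rw [Finset.sum_add_distrib, sum_single _ _ (by omega), sum_single _ _ (by omega)]
  · intro p
    by_cases h1 : (p:ℕ) = s
    · have h2 : s ≠ m + 1 := by omega
      simp only [h1, h2, if_true, if_false, add_zero]
      subst h1
      exact cnt_congr fun σ => Xp_ins_self p σ h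
    · by_cases h2 : (p:ℕ) = m+1
      · simp only [h1, h2, if_true, if_false, zero_add]
        have h3 : m + 1 ≠ s := by omega
        simp only [h3, if_false, zero_add]
        obtain ⟨d, rfl⟩ := Nat.exists_eq_add_of_le hm
        refine Eq.trans (cnt_congr fun σ => ?_) (cnt_Pdec (m+1) d)
        have := Xp_ins_m p σ h0 (by omega)
        rwa [h2] at this
      · simp only [h1, h2, if_false, add_zero]
        exact cnt_false fun σ => Xp_ins_ne p σ h0 (by omega) hm h1 h2

lemma cX_eq (s d n : ℕ) (h0 : 1 ≤ s) (h : s + d < n) : cX n s (s+d) = cE s + d := by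
  induction d generalizing n with
  | zero =>
    obtain ⟨e, rfl⟩ := Nat.exists_eq_add_of_lt h
    rw [add_zero, add_zero, ← cP_eq s (e+1)]
    exact cnt_congr fun σ => Xp_diag s σ
  | succ d ih =>
    obtain ⟨n, rfl⟩ : ∃ k, n = k+1 := ⟨n-1, by omega⟩
    rw [← add_assoc, cX_succ n s (s+d) h0 (by omega) (by omega), ih n (by omega)]
    omega

lemma cX_full (s n : ℕ) (h : s ≤ n) : cX n s n = cA n s := cnt_congr fun σ => Xp_full s h σ

lemma Bp_ins_eq (s : Fin (n+1)) (σ : Perm (Fin n)) : Bp s (ins s σ) ↔ Bp s σ := by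
  rw [Bp, Bp, av2_ins_le s σ le_rfl, decR_ins_eq s σ rfl, dec_ins_lt s σ le_rfl]
  simp only [Fin.forall_iff_succAbove s, vl_ins, vl_ins', sa_lt, lt_sa,
    Fin.succAbove_lt_succAbove_iff, lt_irrefl, vl_lt, vl_not_lt, sa_lt_nat le_rfl, nat_le_sa le_rfl,
    not_true_eq_false, not_false_eq_true, false_implies, true_implies, implies_true,
    true_and, and_true, forall_and]
  grind

lemma Bp_ins_zero {p : ℕ} (σ : Perm (Fin n)) : ¬ Bp (p+1) (ins 0 σ) := by
  rintro ⟨⟨h1, -⟩, h2⟩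
  apply h2
  rw [dec_ins_zero]
  rw [av2_ins_gt 0 σ (by simp)] at h1
  exact fun i j hij hj => h1.2.1 i j hij (by simp) hj

lemma Bp_ins_mid {p : ℕ} (s : Fin (n+1)) (σ : Perm (Fin n)) (h0 : 1 ≤ (s:ℕ)) (h : (s:ℕ) ≤ p) :
    Bp (p+1) (ins s σ) ↔ Xp s p σ := by
  have h' : (s:ℕ) < p+1 := by omega
  have h'' : ¬ p + 1 ≤ (s:ℕ) := by omega
  rw [Bp, Xp, av2_ins_gt s σ h, decR_ins_gt s σ h]
  have hnd := dec_ins_mid s σ h0 h'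
  simp only [hnd, Fin.forall_iff_succAbove s, vl_ins, vl_ins', sa_lt, lt_sa,
    Fin.succAbove_lt_succAbove_iff, lt_irrefl, vl_lt, vl_not_lt, sa_lt_nat' h, nat_le_sa' h, h', h'',
    not_true_eq_false, not_false_eq_true, false_implies, true_implies, implies_true,
    true_and, and_true, forall_and]
  constructor
  · intro hh
    have b0 : av2 p σ := by tauto
    refine ⟨av2_mono σ h b0, hh.2.1, hh.1.2.1, ?_, hh.1.2.2, ?_, ?_⟩
    · intro i j k hij hj hk hk'
      exact b0.1 i j k hij (Fin.lt_def.2 (by omega)) hk'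
    · intro i k hi hk
      refine (tri σ (Fin.lt_def.2 (by omega))).resolve_right ?_
      grind
    · grind
  · rintro ⟨h1, h2, h3, h4, h5, h6, h7⟩
    have b0 : av2 p σ := by
      refine ⟨?_, ?_⟩
      · intro i j k hij hjk hk
        by_cases hk' : (k:ℕ) < s
        · exact h1.1 i j k hij hjk hk'
        · by_cases hj : (j:ℕ) < s
          · exact h4 i j k hij hj (by omega) hk
          · have := h3 j k hjk (by omega) hk
            omega
      · intro i j k l hij hjk hkl hl a1 a2
        by_cases hk' : (l:ℕ) < s
        · exact h1.2 i j k l hij hjk hkl hk' a1 a2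
        · by_cases hj : (j:ℕ) < s
          · exact absurd a1 (h5 i j l hij hj (by omega) hl a2)
          · have := h3 j k hjk (by omega) (by have := Fin.lt_def.1 hkl; omega)
            omega
    have c1 : ∀ i j k : Fin n, i < j → (j:ℕ) < p → p ≤ (k:ℕ) → vl σ i < vl σ j →
        ¬ vl σ k < vl σ i := by
      intro i j k hij hj hk a1
      have := h3 i j hij
      have := h6 i k
      omega
    have c2 : ∀ i j k l : Fin n, i < j → j < k → (k:ℕ) < p → p ≤ (l:ℕ) → vl σ i < vl σ k →
        vl σ k < vl σ l → ¬ vl σ l < vl σ j := by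
      intro i j k l hij hjk hk hl a1 a2
      have := h3 i k (hij.trans hjk)
      have := h6 j l
      have := h7 i k l
      have := Fin.lt_def.1 hij
      have := Fin.lt_def.1 hjk
      omega
    have c3 : ∀ i k : Fin n, (i:ℕ) < s → p ≤ (k:ℕ) → ¬ vl σ k < vl σ i := by
      intro i k hi hk
      have := h6 i k hi hk
      omega
    grind

lemma Bp_zero (σ : Perm (Fin n)) : ¬ Bp 0 σ := fun h => h.2 fun i j _ hj => absurd hj (by omega)

lemma cB_zero (n : ℕ) : cB n 0 = 0 := cnt_false Bp_zero

lemma cB_succ (n p : ℕ) (hp : p ≤ n) : cB (n+1) (p+1) =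
    (if p + 1 ≤ n then cB n (p+1) else 0) + ∑ s ∈ Finset.Icc 1 p, cX n s p := by
  unfold cB
  rw [cnt_succ' _ (fun t => (if t = p+1 then (if p + 1 ≤ n then cnt n (Bp (p+1)) else 0) else 0) +
    (if 1 ≤ t ∧ t ≤ p then cX n t p else 0))]
  · rw [Finset.sum_add_distrib]
    congr 1
    · rw [Finset.sum_ite_eq']
      by_cases h : p + 1 ≤ n <;> simp [h]
    · rw [← Finset.sum_filter]
      apply Finset.sum_congr _ fun _ _ => rfl
      ext x; simp; omega
  · intro t
    rcases lt_trichotomy (t:ℕ) (p+1) with h | h | h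
    · by_cases h0 : 1 ≤ (t:ℕ)
      · have e : (1 ≤ (t:ℕ) ∧ (t:ℕ) ≤ p) := by omega
        simp only [h.ne, e, if_false, if_true, zero_add, and_self]
        exact cnt_congr fun σ => Bp_ins_mid t σ h0 (by omega)
      · have e : ¬ (1 ≤ (t:ℕ) ∧ (t:ℕ) ≤ p) := by omega
        simp only [h.ne, e, if_false]
        have h3 : t = 0 := Fin.ext (by rw [Fin.val_zero]; omega)
        rw [h3]
        exact cnt_false Bp_ins_zero
    · have e : ¬ (1 ≤ (t:ℕ) ∧ (t:ℕ) ≤ p) := by omega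
      have e' : p + 1 ≤ n := by have := t.2; omega
      simp only [h, e', if_true]
      rw [if_neg (by omega), ← h]
      exact cnt_congr fun σ => Bp_ins_eq t σ
    · have e : ¬ (1 ≤ (t:ℕ) ∧ (t:ℕ) ≤ p) := by omega
      simp only [h.ne', e, if_false]
      exact cnt_false fun σ hs => decR_ins_lt t σ h hs.1.2.1
end perm

/-! generating functions -/
section gf
open Finset PowerSeries

noncomputable def eQ (n : ℕ) : ℚ := cE n
noncomputable def sQ (n : ℕ) : ℚ := ∑ s ∈ range n, eQ s
noncomputable def rQ (n : ℕ) : ℚ := ∑ s ∈ range n, sQ s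
noncomputable def tQ (n : ℕ) : ℚ := ∑ q ∈ range (n+1), ((n:ℚ) - q) * sQ q
noncomputable def uQ (n : ℕ) : ℚ := ∑ s ∈ Icc 1 n, (eQ s + ((n:ℚ) - s))
noncomputable def vQ (n : ℕ) : ℚ := ∑ s ∈ range n, uQ s
noncomputable def bQ (n : ℕ) : ℚ := ∑ p ∈ range (n+1), (cB n p : ℚ)

lemma cQ_eq (q d : ℕ) : (cQ (q+d) q : ℚ) = d * sQ q := by
  induction d with
  | zero => simp [cQ_self]
  | succ d ih =>
    rw [← add_assoc, cQ_succ (q+d) q (by omega)]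
    push_cast
    rw [ih]
    have : ∑ s ∈ range q, (cP (q+d) s : ℚ) = sQ q := by
      unfold sQ eQ
      refine sum_congr rfl fun s hs => ?_
      have hs' : s < q := by simpa using hs
      have := cP_eq s (q + d - s)
      rw [show s + (q + d - s) = q + d by omega] at this
      rw [this]
    rw [this]; ring

lemma cA_val (n q : ℕ) (h : q ≤ n) : (cA n q : ℚ) = eQ q + ((n:ℚ) - q) * sQ q := by
  obtain ⟨d, rfl⟩ := Nat.exists_eq_add_of_le h
  rw [cA_eq, cP_eq]
  push_cast
  rw [cQ_eq]
  unfold eQ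
  ring

lemma eQ_zero : eQ 0 = 1 := by simp [eQ, cE_zero]

lemma eQ_succ (n : ℕ) : eQ (n+1) = eQ n + (sQ n + tQ n) := by
  conv_lhs => unfold eQ
  rw [cE_succ]
  push_cast
  rw [sum_congr rfl (fun q hq => cA_val n q (by simpa [Nat.lt_succ_iff] using hq)),
    sum_add_distrib, sum_range_succ]
  unfold tQ sQ
  ring

lemma sQ_succ (n : ℕ) : sQ (n+1) = sQ n + eQ n := sum_range_succ _ _
lemma rQ_succ (n : ℕ) : rQ (n+1) = rQ n + sQ n := sum_range_succ _ _
lemma vQ_succ (n : ℕ) : vQ (n+1) = vQ n + uQ n := sum_range_succ _ _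

lemma tQ_succ (n : ℕ) : tQ (n+1) = tQ n + (rQ n + sQ n) := by
  rw [← rQ_succ]
  unfold tQ rQ
  rw [sum_range_succ, ← sum_add_distrib]
  push_cast
  rw [sub_self, zero_mul, add_zero]
  refine sum_congr rfl fun q _ => ?_
  ring

lemma uQ_succ (n : ℕ) : uQ (n+1) = uQ n + ((n:ℚ) + eQ (n+1)) := by
  unfold uQ
  rw [sum_Icc_succ_top (by omega)]
  push_cast
  have : ∑ s ∈ Icc 1 n, (eQ s + ((n:ℚ) + 1 - s)) = ∑ s ∈ Icc 1 n, (eQ s + ((n:ℚ) - s)) + n := by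
    have h : ∑ s ∈ Icc 1 n, (eQ s + ((n:ℚ) + 1 - s)) =
        ∑ s ∈ Icc 1 n, ((eQ s + ((n:ℚ) - s)) + 1) := by
      refine sum_congr rfl fun q _ => ?_
      ring
    rw [h, sum_add_distrib]
    simp
  rw [this]; ring

lemma bQ_zero : bQ 0 = 0 := by simp [bQ, cB_zero]

lemma bQ_succ (n : ℕ) : bQ (n+1) = bQ n + (eQ (n+1) - 1 + vQ n) := by
  have h1 : ∑ p ∈ range (n+1), ((if p + 1 ≤ n then cB n (p+1) else 0 : ℕ) : ℚ) = bQ n := by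
    rw [sum_range_succ]
    unfold bQ
    rw [sum_range_succ' (fun p => (cB n p : ℚ)), cB_zero]
    simp only [Nat.not_succ_le_self, if_false]
    congr 1
    refine sum_congr rfl fun p hp => ?_
    rw [if_pos (by simpa [Nat.succ_le_iff] using hp)]
  have h2 : ∀ p ∈ range n, ∑ s ∈ Icc 1 p, (cX n s p : ℚ) = uQ p := by
    intro p hp
    unfold uQ
    refine sum_congr rfl fun s hs => ?_
    simp only [mem_Icc, mem_range] at hs hp
    obtain ⟨d, rfl⟩ := Nat.exists_eq_add_of_le hs.2
    rw [cX_eq s d n hs.1 hp]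
    unfold eQ
    push_cast
    ring
  have h3 : ∑ s ∈ Icc 1 n, (cX n s n : ℚ) = eQ (n+1) - 1 := by
    conv_rhs => unfold eQ
    rw [cE_succ, sum_range_succ']
    have : (cA n 0 : ℚ) = 1 := by
      rw [cA_val n 0 (by omega)]
      simp [eQ_zero, sQ]
    push_cast
    rw [this, add_sub_cancel_right, range_eq_Ico, sum_Ico_add' (fun s => (cA n s : ℚ)) 0 n 1]
    refine sum_congr (by ext x; simp) fun s hs => ?_
    simp only [mem_Ico] at hs
    rw [cX_full s n (by omega)]
  conv_lhs => unfold bQ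
  rw [sum_range_succ', cB_zero]
  rw [sum_congr rfl (fun p hp => by
    rw [cB_succ n p (by simpa [Nat.lt_succ_iff] using hp)]), Nat.cast_zero, add_zero]
  push_cast at h1 ⊢
  rw [sum_add_distrib, h1]
  rw [sum_range_succ, h3, sum_congr rfl h2]
  unfold vQ
  ring

lemma gf_step (a b : ℕ → ℚ) (h : ∀ n, a (n+1) = a n + b n) :
    (1 - X) * PowerSeries.mk a = PowerSeries.C (a 0) + X * PowerSeries.mk b := by
  ext n
  cases n with
  | zero => simp [sub_mul]
  | succ n =>
    simp [sub_mul, coeff_succ_X_mul, h, PowerSeries.coeff_C]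

lemma mk_add (a b : ℕ → ℚ) : PowerSeries.mk (fun n => a n + b n) = PowerSeries.mk a + PowerSeries.mk b := by
  ext n; simp

lemma mk_sub (a b : ℕ → ℚ) : PowerSeries.mk (fun n => a n - b n) = PowerSeries.mk a - PowerSeries.mk b := by
  ext n; simp

lemma one_sub_X_ne : (1 - X : PowerSeries ℚ) ≠ 0 := by
  intro h
  have := congrArg (PowerSeries.constantCoeff) h
  simp at this

lemma B_gf : (1 - X)^5 * (1 - 4*X + 5*X^2 - 3*X^3) * (1 + X * PowerSeries.mk bQ) =
    (1 - 9*X + 35*X^2 - 77*X^3 + 107*X^4 - 97*X^5 + 55*X^6 - 17*X^7 + X^8 : PowerSeries ℚ) := by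
  have hS := gf_step sQ eQ sQ_succ
  have hR := gf_step rQ sQ rQ_succ
  have hT := gf_step tQ (fun n => rQ n + sQ n) tQ_succ
  have hE := gf_step eQ (fun n => sQ n + tQ n) eQ_succ
  have hV := gf_step vQ uQ vQ_succ
  have hU := gf_step uQ (fun n => (n:ℚ) + (eQ n + (sQ n + tQ n)))
    (fun n => by rw [uQ_succ, eQ_succ])
  have hB := gf_step bQ (fun n => ((eQ n + (sQ n + tQ n)) - 1) + vQ n)
    (fun n => by rw [bQ_succ, eQ_succ])
  have hO := gf_step (fun _ => 1) (fun _ => 0) (fun n => by simp)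
  have hN := gf_step (fun n => (n:ℚ)) (fun _ => 1) (fun n => by push_cast; ring)
  have z1 : sQ 0 = 0 := by simp [sQ]
  have z2 : rQ 0 = 0 := by simp [rQ]
  have z3 : tQ 0 = 0 := by simp [tQ, sQ]
  have z4 : vQ 0 = 0 := by simp [vQ]
  have z5 : uQ 0 = 0 := by simp [uQ]
  have z6 : PowerSeries.mk (fun _ => (0:ℚ)) = 0 := by ext; simp
  simp only [mk_add, mk_sub, z1, z2, z3, z4, z5, z6, bQ_zero, eQ_zero, map_zero, map_one, zero_add,
    mul_zero, add_zero, Nat.cast_zero] at hS hR hT hE hV hU hB hO hN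
  generalize PowerSeries.mk sQ = S at *
  generalize PowerSeries.mk rQ = R at *
  generalize PowerSeries.mk tQ = T at *
  generalize PowerSeries.mk eQ = E at *
  generalize PowerSeries.mk vQ = V at *
  generalize PowerSeries.mk uQ = U at *
  generalize PowerSeries.mk bQ = B at *
  generalize PowerSeries.mk (fun _ => (1:ℚ)) = O at *
  generalize PowerSeries.mk (fun n => (n:ℚ)) = N at *
  have hz := one_sub_X_ne
  set x : PowerSeries ℚ := X
  have zT : (1-x)^3 * T = x^2 * E := by
    linear_combination (1-x)^2 * hT + x*(1-x)*hR + x*x*hS + x*(1-x)*hS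
  have zN : (1-x)^2 * N = x := by linear_combination (1-x)*hN + x*hO
  have hE' : (1 - 4*x + 5*x^2 - 3*x^3) * E = (1-x)^3 := by
    linear_combination (1-x)^3 * hE + x*(1-x)^2*hS + x * zT
  have zU : (1-x)^4 * U = x*((1-x)*x + x*(1-x)^2*E + (1-x)^3*E + x^2*E) := by
    linear_combination (1-x)^3*hU + x*(1-x)*zN + x*(1-x)^2*hS + x*zT
  have zB : (1-x)^6 * B = x*((1-x)^5*E + (1-x)^4*x*E + (1-x)^2*x^2*E - (1-x)^4
      + x^2*((1-x)*x + x*(1-x)^2*E + (1-x)^3*E + x^2*E)) := by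
    linear_combination (1-x)^5*hB + x*(1-x)^4*hS + x*(1-x)^2*zT - x*(1-x)^4*hO + x*(1-x)^4*hV
      + x^2*zU
  apply mul_left_cancel₀ hz
  linear_combination (1 - 4*x + 5*x^2 - 3*x^3)*x*zB +
    x^2*((1-x)^5 + (1-x)^4*x + (1-x)^2*x^2 + x^2*(x*(1-x)^2 + (1-x)^3 + x^2))*hE'

lemma cat_eq : catalanGF = 1 + X * catalanGF^2 := by
  unfold catalanGF
  ext n
  cases n with
  | zero => simp
  | succ n =>
    rw [map_add, coeff_succ_X_mul, sq, coeff_mul]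
    simp [coeff_one, catalan_succ']

noncomputable def FF : PowerSeries ℚ := PowerSeries.mk fun n => (cF n : ℚ)

lemma telesc (f : ℕ → ℚ) (k n : ℕ) (h : k ≤ n) :
    ∑ p ∈ Icc k n, (f p - f (p+1)) = f k - f (n+1) := by
  induction n, h using Nat.le_induction with
  | base => simp
  | succ n h ih => rw [sum_Icc_succ_top (by omega), ih]; ring

lemma cW_coeff (n : ℕ) : ∀ k ≤ n, (cW n k : ℚ) = coeff n (FF * (X * catalanGF)^k) := by
  have ht : ∀ k, (X * catalanGF)^(k+1) - (X * catalanGF)^(k+2) = X * (X * catalanGF)^k := by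
    intro k
    linear_combination (X * catalanGF)^k * X * cat_eq
  induction n with
  | zero =>
    intro k hk
    obtain rfl : k = 0 := by omega
    simp [FF, cW_zero]
  | succ n ih =>
    intro k hk
    cases k with
    | zero => simp [FF, cW_zero]
    | succ k =>
      have hk' : k ≤ n := by omega
      rw [cW_succ n k hk']
      push_cast
      have h1 : ∀ p ∈ Icc k n, (cW n p : ℚ) =
          coeff (n+1) (FF * (X * catalanGF)^(p+1)) - coeff (n+1) (FF * (X * catalanGF)^(p+1+1)) := by
        intro p hp
        rw [ih p (by simp at hp; omega), ← coeff_succ_X_mul, ← map_sub]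
        congr 1
        linear_combination -FF * ht p
      rw [sum_congr rfl h1]
      rw [telesc (fun p => coeff (n+1) (FF * (X * catalanGF)^(p+1))) k n hk']
      have h3 : coeff (n+1) (FF * (X * catalanGF)^(n+1+1)) = 0 := by
        rw [mul_pow, mul_left_comm, coeff_X_pow_mul', if_neg (by omega)]
      simp only [h3, sub_zero]

lemma cF_zero : cF 0 = 1 := cnt_zero fun σ => ⟨fun i => i.elim0, fun i => i.elim0, fun i => i.elim0⟩

lemma FF_eq : FF = 1 + X * catalanGF * FF + X * PowerSeries.mk bQ := by
  ext n
  cases n with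
  | zero => simp [FF, cF_zero, mul_assoc]
  | succ n =>
    have h1 := cW_coeff (n+1) 1 (by omega)
    rw [cW_succ n 0 (by omega)] at h1
    rw [pow_one, mul_comm] at h1
    rw [map_add, map_add, ← h1, coeff_succ_X_mul]
    have h2 : Icc 0 n = range (n+1) := by ext x; simp
    simp [FF, cF_succ, h2, coeff_one, bQ, sum_add_distrib]

lemma FF_val : FF = catalanGF * (1 + X * PowerSeries.mk bQ) := by
  linear_combination catalanGF * FF_eq - FF * cat_eq

end gf

lemma contains_iff {n : ℕ} (π : Perm (Fin n)) (σ : Fin 4 → Fin 4) :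
    ContainsPattern π σ ↔ ∃ i j k l : Fin n, i < j ∧ j < k ∧ k < l ∧
      ∀ a b : Fin 4, σ a < σ b ↔ vl π (![i, j, k, l] a) < vl π (![i, j, k, l] b) := by
  constructor
  · rintro ⟨f, hf⟩
    refine ⟨f 0, f 1, f 2, f 3, by simp, by simp, by simp, ?_⟩
    have : ![f 0, f 1, f 2, f 3] = f := by
      ext a; fin_cases a <;> rfl
    rw [this]
    intro a b
    rw [hf a b, Fin.lt_def]
    rfl
  · rintro ⟨i, j, k, l, h1, h2, h3, h⟩
    have hm : StrictMono ![i, j, k, l] := by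
      rw [Fin.strictMono_iff_lt_succ]
      intro a
      fin_cases a <;> simpa
    refine ⟨OrderEmbedding.ofStrictMono _ hm, fun a b => ?_⟩
    rw [h a b, Fin.lt_def]
    rfl

lemma avT_iff {n : ℕ} (π : Perm (Fin n)) :
    (∀ σ ∈ ({![0,3,1,2], ![1,2,3,0], ![2,0,1,3]} : Set (Fin 4 → Fin 4)), ¬ ContainsPattern π σ) ↔
      avT π := by
  simp only [Set.mem_insert_iff, Set.mem_singleton_iff, forall_eq_or_imp, forall_eq, contains_iff,
    not_exists, not_and, avT]
  refine and_congr ?_ (and_congr ?_ ?_)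
  all_goals
    refine forall_congr' fun i => forall_congr' fun j => forall_congr' fun k => forall_congr' fun l =>
      forall_congr' fun h1 => forall_congr' fun h2 => forall_congr' fun h3 => ?_
    constructor
    · intro h a b c
      apply h
      simp only [Fin.forall_fin_succ, Fin.forall_fin_zero]
      simp
      omega
    · intro h hh
      simp only [Fin.forall_fin_succ] at hh
      simp at hh
      omega

lemma gf_eq : avoiderGF ({![0,3,1,2], ![1,2,3,0], ![2,0,1,3]} : Set (Fin 4 → Fin 4)) = FF := by
  unfold avoiderGF FF
  congr 1
  funext n
  have : avoiderCount ({![0,3,1,2], ![1,2,3,0], ![2,0,1,3]} : Set (Fin 4 → Fin 4)) n = cF n :=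
    cnt_congr avT_iff
  rw [this]

end TAv

theorem statement_2 :
    ((1 : PowerSeries ℚ) - X)^5 * (1 - 4*X + 5*X^2 - 3*X^3) * avoiderGF ({![0,3,1,2], ![1,2,3,0], ![2,0,1,3]} : Set (Fin 4 → Fin 4)) =
      (1 - 9*X + 35*X^2 - 77*X^3 + 107*X^4 - 97*X^5 + 55*X^6 - 17*X^7 + X^8) * catalanGF := by
  rw [TAv.gf_eq, TAv.FF_val, ← TAv.B_gf]
  ring
end
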